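/- arXiv:1807.01005 — 3 statements merged into one kernel-verified Lean document; each statement's English description precedes it below -/
import Mathlib

section
/- Let X be a finite abstract simplicial complex and Γ a finite collection of subcomplexes with union X. Let F be a field and ℓ an integer with -1 ≤ ℓ < |Γ|. Suppose that for every simplex σ of the nerve N(Γ) of dimension at most ℓ, the reduced homology group H̃_{|σ|-2}(⋃σ, F) vanishes (where H̃_{-1}(K,F)=0 means K is nonempty). Then dim H̃_ℓ(N(Γ), F) ≤ dim H̃_ℓ(X, F). -/
open Finset

/-- The faces of an abstract simplicial complex: a set of nonempty finite sets of
vertices, closed under taking nonempty subsets. -/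
def IsComplex {V : Type*} (S : Set (Finset V)) : Prop :=
  (∀ s ∈ S, s.Nonempty) ∧ ∀ s ∈ S, ∀ t ⊆ s, t.Nonempty → t ∈ S

/-- The nerve of a collection `Γ` of (sub)complexes, as a set of finsets of the index
type: the simplices are the nonempty subcollections with a common face. -/
def nerveC {ι V : Type*} (Γ : ι → Set (Finset V)) : Set (Finset ι) :=
  {σ | σ.Nonempty ∧ (⋂ i ∈ (σ : Finset ι), Γ i).Nonempty}

/-- Simplicial `n`-chains (dimension `n`, i.e. on vertex sets of cardinality `n+1`)
on the vertex type `V`, with coefficients in `A`. -/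
abbrev Chains (A V : Type*) [AddCommGroup A] [LinearOrder V] (n : ℕ) : Type _ :=
  {s : Finset V // s.card = n + 1} →₀ A

variable (R : Type*) [CommRing R] (A : Type*) [AddCommGroup A] [Module R A]
variable (V : Type*) [LinearOrder V]

/-- The simplicial boundary map, with the usual alternating signs determined by the
linear order on the vertices. -/
noncomputable def bdry (n : ℕ) : Chains A V (n + 1) →ₗ[R] Chains A V n :=
  Finsupp.lsum R fun s =>
    ∑ v ∈ (s : Finset V).attach,
      ((-1 : ℤ) ^ (((s : Finset V).filter (fun w => w < v.1)).card)) •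
        (Finsupp.lsingle (R := R) ⟨(s : Finset V).erase v.1, by
          rw [Finset.card_erase_of_mem v.2, s.2]; rfl⟩)

/-- The augmentation map on `0`-chains. -/
noncomputable def aug : Chains A V 0 →ₗ[R] A :=
  Finsupp.lsum R fun _ => LinearMap.id

/-- Reduced cycles: kernel of the boundary map, resp. of the augmentation in degree 0. -/
noncomputable def cycles : (n : ℕ) → Submodule R (Chains A V n)
  | 0 => LinearMap.ker (aug R A V)
  | (n + 1) => LinearMap.ker (bdry R A V n)

/-- Chains supported on the simplices belonging to `S`. -/
def chainsIn (S : Set (Finset V)) (n : ℕ) : Submodule R (Chains A V n) :=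
  Finsupp.supported A R {s : {s : Finset V // s.card = n + 1} | ↑s ∈ S}

/-- Reduced cycles of the complex `S`. -/
noncomputable def cyclesIn (S : Set (Finset V)) (n : ℕ) : Submodule R (Chains A V n) :=
  cycles R A V n ⊓ chainsIn R A V S n

/-- Boundaries of chains of the complex `S`. -/
noncomputable def boundariesIn (S : Set (Finset V)) (n : ℕ) : Submodule R (Chains A V n) :=
  Submodule.map (bdry R A V n) (chainsIn R A V S (n + 1))

/-- Reduced simplicial homology of the complex `S` in degree `n ≥ 0`,
with coefficients in the `R`-module `A`. -/
noncomputable abbrev redH (S : Set (Finset V)) (n : ℕ) : Type _ :=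
  (cyclesIn R A V S n) ⧸
    (Submodule.comap (cyclesIn R A V S n).subtype (boundariesIn R A V S n))

/-- Vanishing of the reduced homology of `S` in degree `n : ℤ`, with the convention
that `H̃₋₁(S) = 0` iff `S` is nonempty (and trivial vanishing below degree `-1`). -/
def RedHVanish (S : Set (Finset V)) (n : ℤ) : Prop :=
  if n < -1 then True
  else if n = -1 then S.Nonempty
  else Subsingleton (redH R A V S n.toNat)

open scoped Classical in
/-- The dimension (rank) of the reduced homology of `S` in degree `n : ℤ`; in degree `-1`
it is `0` iff `S` is nonempty, in accordance with the convention. -/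
noncomputable def redHRank (S : Set (Finset V)) (n : ℤ) : Cardinal :=
  if n < -1 then 0
  else if n = -1 then (if S.Nonempty then (0 : Cardinal) else 1)
  else Module.rank R (redH R A V S n.toNat)



universe u
set_option linter.unusedSectionVars false

namespace NerveU

section basic
variable {K : Type*} [Field K] {α β : Type*} [LinearOrder α] [LinearOrder β]

lemma map_mem_supported {γ δ : Type*} (T : (γ →₀ K) →ₗ[K] (δ →₀ K)) {P : Set γ} {Q : Set δ}
    (h : ∀ s ∈ P, T (Finsupp.single s 1) ∈ Finsupp.supported K K Q) {x : γ →₀ K}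
    (hx : x ∈ Finsupp.supported K K P) : T x ∈ Finsupp.supported K K Q := by
  have : Finsupp.supported K K P ≤ (Finsupp.supported K K Q).comap T := by
    rw [Finsupp.supported_eq_span_single, Submodule.span_le]
    rintro _ ⟨s, hs, rfl⟩
    exact h s hs
  exact this hx

lemma eq_on_supported {γ M : Type*} [AddCommGroup M] [Module K M] (T U : (γ →₀ K) →ₗ[K] M)
    {P : Set γ} (h : ∀ s ∈ P, T (Finsupp.single s 1) = U (Finsupp.single s 1)) {x : γ →₀ K}
    (hx : x ∈ Finsupp.supported K K P) : T x = U x := by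
  have : Finsupp.supported K K P ≤ LinearMap.eqLocus T U := by
    rw [Finsupp.supported_eq_span_single, Submodule.span_le]
    rintro _ ⟨s, hs, rfl⟩
    exact h s hs
  exact this hx

variable (K) in
/-- sign of a vertex in a simplex -/
def sg (w : α) (s : Finset α) : K := (-1) ^ ((s.filter (fun x => x < w)).card)

lemma sg_mul_self (w : α) (s : Finset α) : sg K w s * sg K w s = 1 := by
  unfold sg; rw [← mul_pow]; simp

lemma sg_erase_of_lt {v w : α} {s : Finset α} (hv : v ∈ s) (h : v < w) :
    sg K w (s.erase v) = - sg K w s := by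
  unfold sg
  have h1 : v ∈ s.filter (fun x => x < w) := by simp [hv, h]
  rw [Finset.filter_erase, ← Finset.card_erase_add_one h1, pow_succ]; ring

lemma sg_erase_of_not_lt {v w : α} {s : Finset α} (h : ¬ v < w) :
    sg K w (s.erase v) = sg K w s := by
  unfold sg
  rw [Finset.filter_erase, Finset.erase_eq_of_notMem (by simp [h])]

lemma sg_insert_of_lt {v w : α} {s : Finset α} (hv : v ∉ s) (h : v < w) :
    sg K w (insert v s) = - sg K w s := by
  have := sg_erase_of_lt (K := K) (Finset.mem_insert_self v s) h
  rw [Finset.erase_insert hv] at this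
  rw [this, neg_neg]

lemma sg_insert_of_not_lt {v w : α} {s : Finset α} (hv : v ∉ s) (h : ¬ v < w) :
    sg K w (insert v s) = sg K w s := by
  have := sg_erase_of_not_lt (K := K) (s := insert v s) h
  rw [Finset.erase_insert hv] at this
  rw [this]

variable (K α) in
/-- augmented boundary -/
noncomputable def dd : (Finset α →₀ K) →ₗ[K] (Finset α →₀ K) :=
  Finsupp.linearCombination K (fun s => ∑ v ∈ s, Finsupp.single (s.erase v) (sg K v s))

lemma dd_single (s : Finset α) : dd K α (Finsupp.single s 1) =
    ∑ v ∈ s, Finsupp.single (s.erase v) (sg K v s) := by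
  simp [dd]

lemma single_eq_smul {γ : Type*} (s : γ) (c : K) :
    Finsupp.single s c = c • Finsupp.single s (1 : K) := by simp

variable (K) in
/-- cone operator -/
noncomputable def cone (w : α) : (Finset α →₀ K) →ₗ[K] (Finset α →₀ K) :=
  Finsupp.linearCombination K
    (fun s => if w ∈ s then 0 else Finsupp.single (insert w s) (sg K w s))

lemma cone_single_mem {w : α} {s : Finset α} (h : w ∈ s) :
    cone K w (Finsupp.single s 1) = 0 := by
  simp [cone, h]

lemma cone_single_notMem {w : α} {s : Finset α} (h : w ∉ s) :
    cone K w (Finsupp.single s 1) = Finsupp.single (insert w s) (sg K w s) := by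
  simp [cone, h]

lemma map_dd_single {M : Type*} [AddCommGroup M] [Module K M] (T : (Finset α →₀ K) →ₗ[K] M)
    (s : Finset α) :
    T (dd K α (Finsupp.single s 1)) =
      ∑ v ∈ s, sg K v s • T (Finsupp.single (s.erase v) 1) := by
  rw [dd_single, map_sum]
  refine Finset.sum_congr rfl fun v _ => ?_
  rw [single_eq_smul, map_smul]

lemma dd_cone_single (w : α) (s : Finset α) :
    dd K α (cone K w (Finsupp.single s 1)) + cone K w (dd K α (Finsupp.single s 1))
      = Finsupp.single s 1 := by
  by_cases hw : w ∈ s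
  · rw [cone_single_mem hw, map_zero, zero_add, map_dd_single, Finset.sum_eq_single_of_mem w hw]
    · rw [cone_single_notMem (Finset.notMem_erase w s), Finset.insert_erase hw,
        sg_erase_of_not_lt (lt_irrefl w), Finsupp.smul_single, smul_eq_mul, sg_mul_self]
    · intro v hv hvw
      rw [cone_single_mem (Finset.mem_erase.2 ⟨hvw.symm, hw⟩), smul_zero]
  · rw [cone_single_notMem hw, map_dd_single, single_eq_smul, map_smul, dd_single,
      Finset.sum_insert hw, smul_add, Finset.erase_insert hw,
      sg_insert_of_not_lt hw (lt_irrefl w), Finsupp.smul_single, smul_eq_mul, sg_mul_self,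
      add_assoc, add_eq_left, Finset.smul_sum, ← Finset.sum_add_distrib]
    refine Finset.sum_eq_zero fun v hv => ?_
    have hvw : v ≠ w := fun h => hw (h ▸ hv)
    rw [cone_single_notMem (fun h => hw (Finset.mem_of_mem_erase h)),
      Finset.erase_insert_of_ne hvw.symm, Finsupp.smul_single, Finsupp.smul_single,
      ← Finsupp.single_add]
    rcases lt_or_gt_of_ne hvw with h | h
    · rw [sg_erase_of_lt hv h, sg_insert_of_not_lt hw h.not_gt]
      simp only [smul_eq_mul]
      rw [show sg K w s * sg K v s + sg K v s * -sg K w s = 0 by ring, Finsupp.single_zero]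
    · rw [sg_erase_of_not_lt h.not_gt, sg_insert_of_lt hw h]
      simp only [smul_eq_mul]
      rw [show sg K w s * -sg K v s + sg K v s * sg K w s = 0 by ring, Finsupp.single_zero]

lemma dd_cone (w : α) (x : Finset α →₀ K) :
    dd K α (cone K w x) + cone K w (dd K α x) = x := by
  have : dd K α ∘ₗ cone K w + cone K w ∘ₗ dd K α = LinearMap.id := by
    ext1 s
    ext1
    exact dd_cone_single w s
  exact congrArg (fun T => T x) this

lemma dd_dd_single (s : Finset α) : dd K α (dd K α (Finsupp.single s 1)) = 0 := by
  induction s using Finset.induction_on with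
  | empty => simp [dd_single]
  | insert w s hw ih =>
    have h1 : Finsupp.single (insert w s) (1 : K) = sg K w s • cone K w (Finsupp.single s 1) := by
      rw [cone_single_notMem hw, Finsupp.smul_single, smul_eq_mul, sg_mul_self]
    have h2 := dd_cone (K := K) w (Finsupp.single s 1)
    have h3 := dd_cone (K := K) w (dd K α (Finsupp.single s 1))
    rw [ih, map_zero, add_zero] at h3
    rw [h1, map_smul, map_smul, eq_sub_of_add_eq h2, map_sub, h3, sub_self, smul_zero]

lemma dd_dd (x : Finset α →₀ K) : dd K α (dd K α x) = 0 := by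
  have : dd K α ∘ₗ dd K α = 0 := by
    ext1 s
    ext1
    simpa using dd_dd_single (K := K) s
  exact congrArg (fun T => T x) this

variable (K) in
/-- pushforward along an order embedding -/
noncomputable def push (a : α ↪o β) : (Finset α →₀ K) →ₗ[K] (Finset β →₀ K) :=
  Finsupp.lmapDomain K K (Finset.map a.toEmbedding)

lemma push_single (a : α ↪o β) (s : Finset α) (c : K) :
    push K a (Finsupp.single s c) = Finsupp.single (s.map a.toEmbedding) c := by
  simp [push]

lemma push_injective (a : α ↪o β) : Function.Injective (push K a) :=
  Finsupp.mapDomain_injective (Finset.map_injective _)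

lemma sg_map (a : α ↪o β) (v : α) (s : Finset α) :
    sg K (a v) (s.map a.toEmbedding) = sg K v s := by
  unfold sg
  rw [Finset.filter_map, Finset.card_map]
  congr 3
  ext x
  simp

lemma push_dd (a : α ↪o β) (x : Finset α →₀ K) :
    push K a (dd K α x) = dd K β (push K a x) := by
  have : push K a ∘ₗ dd K α = dd K β ∘ₗ push K a := by
    ext1 s
    ext1
    change push K a (dd K α (Finsupp.single s 1)) = dd K β (push K a (Finsupp.single s 1))
    rw [push_single, dd_single, dd_single, map_sum, Finset.sum_map]
    refine Finset.sum_congr rfl fun v _ => ?_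
    rw [push_single, Finset.map_erase]
    congr 1
    exact (sg_map a v s).symm
  exact congrArg (fun T => T x) this

variable (K α) in
/-- projection to simplices with `k` vertices -/
noncomputable def proj (k : ℕ) : (Finset α →₀ K) →ₗ[K] (Finset α →₀ K) :=
  Finsupp.linearCombination K (fun s => if s.card = k then Finsupp.single s 1 else 0)

lemma proj_single (k : ℕ) (s : Finset α) : proj K α k (Finsupp.single s 1) =
    if s.card = k then Finsupp.single s 1 else 0 := by
  simp [proj]

lemma proj_dd (k : ℕ) (x : Finset α →₀ K) :
    proj K α k (dd K α x) = dd K α (proj K α (k+1) x) := by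
  have : proj K α k ∘ₗ dd K α = dd K α ∘ₗ proj K α (k+1) := by
    ext1 s
    ext1
    change proj K α k (dd K α (Finsupp.single s 1)) = dd K α (proj K α (k+1) (Finsupp.single s 1))
    rw [proj_single, map_dd_single]
    split_ifs with h
    · rw [dd_single]
      refine Finset.sum_congr rfl fun v hv => ?_
      rw [proj_single, if_pos (by rw [Finset.card_erase_of_mem hv, h]; rfl), ← single_eq_smul]
    · rw [map_zero]
      refine Finset.sum_eq_zero fun v hv => ?_
      rw [proj_single, if_neg, smul_zero]
      intro h'
      apply h
      rw [← Finset.card_erase_add_one hv, h']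
  exact congrArg (fun T => T x) this

lemma dd_mem {P Q : Set (Finset α)} (h : ∀ s ∈ P, ∀ v ∈ s, s.erase v ∈ Q) {x : Finset α →₀ K}
    (hx : x ∈ Finsupp.supported K K P) : dd K α x ∈ Finsupp.supported K K Q := by
  refine map_mem_supported _ (fun s hs => ?_) hx
  rw [dd_single]
  exact Submodule.sum_mem _ fun v hv => Finsupp.single_mem_supported K _ (h s hs v hv)

lemma cone_mem {w : α} {P Q : Set (Finset α)} (h : ∀ s ∈ P, w ∉ s → insert w s ∈ Q)
    {x : Finset α →₀ K}
    (hx : x ∈ Finsupp.supported K K P) : cone K w x ∈ Finsupp.supported K K Q := by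
  refine map_mem_supported _ (fun s hs => ?_) hx
  by_cases hw : w ∈ s
  · rw [cone_single_mem hw]; exact Submodule.zero_mem _
  · rw [cone_single_notMem hw]; exact Finsupp.single_mem_supported K _ (h s hs hw)

end basic

section mixed
variable {K : Type*} [Field K] {VV ι W : Type*} [LinearOrder VV] [LinearOrder ι] [LinearOrder W]
  [Fintype VV] [Fintype ι]

/-- preimage of a simplex under an embedding -/
def pre {α : Type*} [LinearOrder α] [Fintype α] (a : α ↪o W) (s : Finset W) : Finset α :=
  Finset.univ.filter (fun v => a v ∈ s)

lemma mem_pre {α : Type*} [LinearOrder α] [Fintype α] (a : α ↪o W) (s : Finset W) (v : α) :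
    v ∈ pre a s ↔ a v ∈ s := by simp [pre]

lemma pre_map {α : Type*} [LinearOrder α] [Fintype α] (a : α ↪o W) (s : Finset α) :
    pre a (s.map a.toEmbedding) = s := by
  ext v; simp [mem_pre]

lemma pre_erase_self {α : Type*} [LinearOrder α] [Fintype α] (a : α ↪o W) (s : Finset W) (v : α) :
    pre a (s.erase (a v)) = (pre a s).erase v := by
  ext v; simp [mem_pre]

lemma pre_insert_self {α : Type*} [LinearOrder α] [Fintype α] (a : α ↪o W) (s : Finset W) (v : α) :
    pre a (insert (a v) s) = insert v (pre a s) := by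
  ext v; simp [mem_pre]

lemma pre_erase_of_ne {α : Type*} [LinearOrder α] [Fintype α] (a : α ↪o W) (s : Finset W) (w : W)
    (h : ∀ v, a v ≠ w) : pre a (s.erase w) = pre a s := by
  ext v; simp [mem_pre, h]

lemma pre_insert_of_ne {α : Type*} [LinearOrder α] [Fintype α] (a : α ↪o W) (s : Finset W) (w : W)
    (h : ∀ v, a v ≠ w) : pre a (insert w s) = pre a s := by
  ext v; simp [mem_pre, h]

lemma pre_map_of_ne {α γ : Type*} [LinearOrder α] [Fintype α] [LinearOrder γ]
    (a : α ↪o W) (b : γ ↪o W) (h : ∀ v i, a v ≠ b i) (s : Finset γ) :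
    pre a (s.map b.toEmbedding) = ∅ := by
  ext v
  simp only [mem_pre, Finset.mem_map, Finset.notMem_empty, iff_false]
  rintro ⟨i, _, hi⟩
  exact h v i hi.symm

variable (a : VV ↪o W) (b : ι ↪o W) (Γ : ι → Set (Finset VV))

/-- The mixed complex. -/
def JJ (σ : Finset ι) : Set (Finset W) :=
  {s | pre b s ⊆ σ ∧ (pre b s = ∅ ∨ pre b s ∈ nerveC Γ) ∧
    (pre a s = ∅ ∨ (∃ i ∈ σ, pre a s ∈ Γ i) ∧ ∀ j ∈ pre b s, pre a s ∈ Γ j)}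

variable {a b Γ}

lemma nerve_mono {ρ σ : Finset ι} (hσ : σ ∈ nerveC Γ) (h : ρ ⊆ σ) : ρ = ∅ ∨ ρ ∈ nerveC Γ := by
  rcases ρ.eq_empty_or_nonempty with h0 | h0
  · exact Or.inl h0
  · refine Or.inr ⟨h0, ?_⟩
    obtain ⟨τ, hτ⟩ := hσ.2
    refine ⟨τ, ?_⟩
    simp only [Set.mem_iInter] at hτ ⊢
    exact fun i hi => hτ i (h hi)

lemma JJ_mono {ρ σ : Finset ι} (h : ρ ⊆ σ) : JJ a b Γ ρ ⊆ JJ a b Γ σ := by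
  rintro s ⟨h1, h2, h3⟩
  refine ⟨h1.trans h, h2, h3.imp id fun h3 => ⟨?_, h3.2⟩⟩
  obtain ⟨i, hi, h4⟩ := h3.1
  exact ⟨i, h hi, h4⟩

lemma nerve_of_mem {ρ : Finset ι} {τ : Finset VV} (h : ρ.Nonempty) (h' : ∀ j ∈ ρ, τ ∈ Γ j) :
    ρ ∈ nerveC Γ := by
  refine ⟨h, τ, ?_⟩
  simpa using h'

lemma JJ_erase (hab : ∀ v i, a v ≠ b i) (hsur : ∀ w, (∃ v, a v = w) ∨ ∃ i, b i = w)
    (hΓ : ∀ i, IsComplex (Γ i)) {σ : Finset ι} {s : Finset W} (hs : s ∈ JJ a b Γ σ) (w : W) :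
    s.erase w ∈ JJ a b Γ σ := by
  obtain ⟨h1, h2, h3⟩ := hs
  rcases hsur w with ⟨v, rfl⟩ | ⟨i, rfl⟩
  · have hb : pre b (s.erase (a v)) = pre b s := pre_erase_of_ne _ _ _ (fun i => (hab v i).symm)
    refine ⟨by rwa [hb], by rwa [hb], ?_⟩
    rw [hb, pre_erase_self]
    rcases ((pre a s).erase v).eq_empty_or_nonempty with h0 | h0
    · exact Or.inl h0
    · right
      rcases h3 with h3 | ⟨⟨i, hi, h4⟩, h5⟩
      · simp [h3] at h0
      · exact ⟨⟨i, hi, (hΓ i).2 _ h4 _ (Finset.erase_subset _ _) h0⟩,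
          fun j hj => (hΓ j).2 _ (h5 j hj) _ (Finset.erase_subset _ _) h0⟩
  · have ha : pre a (s.erase (b i)) = pre a s := pre_erase_of_ne _ _ _ (fun v => (hab v i))
    refine ⟨?_, ?_, ?_⟩
    · rw [pre_erase_self]; exact (Finset.erase_subset _ _).trans h1
    · rw [pre_erase_self]
      rcases h2 with h2 | h2
      · left; simp [h2]
      · exact nerve_mono h2 (Finset.erase_subset _ _)
    · rw [ha, pre_erase_self]
      exact h3.imp id fun h3 => ⟨h3.1, fun j hj => h3.2 j (Finset.mem_of_mem_erase hj)⟩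

open scoped Classical in
variable (K a b Γ) in
/-- the partial contraction -/
noncomputable def hh (σ : Finset ι) : (Finset W →₀ K) →ₗ[K] (Finset W →₀ K) :=
  Finsupp.linearCombination K (fun s =>
    if h : ∃ i ∈ σ, pre a s ∈ Γ i then cone K (b h.choose) (Finsupp.single s 1) else 0)

lemma hh_zero {σ : Finset ι} (hΓ : ∀ i, IsComplex (Γ i)) {s : Finset W} (h : pre a s = ∅) :
    hh K a b Γ σ (Finsupp.single s 1) = 0 := by
  have : ¬ ∃ i ∈ σ, pre a s ∈ Γ i := by
    rintro ⟨i, _, hi⟩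
    have := (hΓ i).1 _ hi
    simp [h] at this
  simp only [hh, Finsupp.linearCombination_single, one_smul, dif_neg this]

lemma hh_pos {σ : Finset ι} {τ : Finset VV} (h : ∃ i ∈ σ, τ ∈ Γ i) : ∃ i ∈ σ, τ ∈ Γ i ∧
    ∀ s : Finset W, pre a s = τ → hh K a b Γ σ (Finsupp.single s 1) =
      cone K (b i) (Finsupp.single s 1) := by
  refine ⟨h.choose, h.choose_spec.1, h.choose_spec.2, ?_⟩
  rintro s rfl
  simp only [hh, Finsupp.linearCombination_single, one_smul, dif_pos h]

lemma JJ_insert (hab : ∀ v i, a v ≠ b i) {σ : Finset ι} {s : Finset W} (hs : s ∈ JJ a b Γ σ)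
    {i : ι} (hi : i ∈ σ) (hiN : insert i (pre b s) ∈ nerveC Γ)
    (h : pre a s = ∅ ∨ pre a s ∈ Γ i) : insert (b i) s ∈ JJ a b Γ σ := by
  have ha : pre a (insert (b i) s) = pre a s := pre_insert_of_ne _ _ _ (fun v => (hab v i))
  obtain ⟨h1, h2, h3⟩ := hs
  refine ⟨?_, ?_, ?_⟩
  · rw [pre_insert_self]; exact Finset.insert_subset hi h1
  · rw [pre_insert_self]; exact Or.inr hiN
  · rw [ha, pre_insert_self]
    rcases h3 with h3 | h3
    · exact Or.inl h3
    rcases h with h | h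
    · exact Or.inl h
    refine Or.inr ⟨h3.1, fun j hj => ?_⟩
    rcases Finset.mem_insert.1 hj with rfl | hj
    · exact h
    · exact h3.2 j hj

/-- Part of the mixed complex with bounded number of left vertices. -/
def JL (a : VV ↪o W) (b : ι ↪o W) (Γ : ι → Set (Finset VV)) (σ : Finset ι) (m : ℕ) :
    Set (Finset W) := {s | s ∈ JJ a b Γ σ ∧ (pre a s).card ≤ m}

lemma hh_single_mem (hab : ∀ v i, a v ≠ b i)
    (hΓ : ∀ i, IsComplex (Γ i)) {σ : Finset ι} {s : Finset W} (hs : s ∈ JJ a b Γ σ) {m : ℕ}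
    (hm : (pre a s).card ≤ m) :
    hh K a b Γ σ (Finsupp.single s 1) ∈ Finsupp.supported K K (JL a b Γ σ m) := by
  rcases hs.2.2 with h0 | h0
  · rw [hh_zero hΓ h0]; exact Submodule.zero_mem _
  · obtain ⟨i, hi, hiΓ, h⟩ := hh_pos (K := K) (a := a) (b := b) h0.1
    rw [h s rfl]
    refine cone_mem (P := {s}) ?_ (Finsupp.single_mem_supported K _ (by simp))
    rintro t (ht : t = s) _
    rw [ht]
    refine ⟨JJ_insert hab hs hi ?_ (Or.inr hiΓ), ?_⟩
    · refine nerve_of_mem (τ := pre a s) (by simp) fun j hj => ?_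
      rcases Finset.mem_insert.1 hj with rfl | hj
      · exact hiΓ
      · exact h0.2 j hj
    · rw [pre_insert_of_ne a s (b i) (fun v => hab v i)]; exact hm

lemma EE_single_mem (hab : ∀ v i, a v ≠ b i) (hsur : ∀ w, (∃ v, a v = w) ∨ ∃ i, b i = w)
    (hΓ : ∀ i, IsComplex (Γ i)) {σ : Finset ι} {s : Finset W} {m : ℕ}
    (hs : s ∈ JL a b Γ σ (m + 1)) :
    Finsupp.single s 1 - dd K W (hh K a b Γ σ (Finsupp.single s 1))
      - hh K a b Γ σ (dd K W (Finsupp.single s 1)) ∈ Finsupp.supported K K (JL a b Γ σ m) := by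
  obtain ⟨hs, hm⟩ := hs
  rcases hs.2.2 with h0 | h0
  · have : hh K a b Γ σ (dd K W (Finsupp.single s 1)) = 0 := by
      rw [map_dd_single]
      refine Finset.sum_eq_zero fun w _ => ?_
      rw [hh_zero hΓ, smul_zero]
      refine Finset.subset_empty.1 (h0 ▸ ?_)
      intro v hv
      rw [mem_pre] at hv ⊢
      exact Finset.mem_of_mem_erase hv
    rw [this, hh_zero hΓ h0, map_zero, sub_zero, sub_zero]
    exact Finsupp.single_mem_supported K _ ⟨hs, by simp [h0]⟩
  · obtain ⟨i, hi, hiΓ, h⟩ := hh_pos (K := K) (a := a) (b := b) h0.1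
    rw [h s rfl, sub_eq_of_eq_add' (dd_cone (K := K) (b i) (Finsupp.single s 1)).symm,
      map_dd_single, map_dd_single, ← Finset.sum_sub_distrib]
    refine Submodule.sum_mem _ fun w hw => ?_
    rw [← smul_sub]
    refine Submodule.smul_mem _ _ ?_
    rcases hsur w with ⟨v, rfl⟩ | ⟨j, rfl⟩
    · have hc : (pre a (s.erase (a v))).card ≤ m := by
        rw [pre_erase_self, Finset.card_erase_of_mem ((mem_pre _ _ _).2 hw)]; omega
      have hJ := JJ_erase hab hsur hΓ hs (a v)
      refine Submodule.sub_mem _ ?_ (hh_single_mem hab hΓ hJ hc)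
      refine cone_mem (P := {s.erase (a v)}) ?_ (Finsupp.single_mem_supported K _ (by simp))
      rintro _ rfl _
      have hb : pre b (s.erase (a v)) = pre b s := pre_erase_of_ne _ _ _ (fun i => (hab v i).symm)
      refine ⟨JJ_insert hab hJ hi ?_ ?_, ?_⟩
      · rw [hb]
        refine nerve_of_mem (τ := pre a s) (by simp) fun j hj => ?_
        rcases Finset.mem_insert.1 hj with rfl | hj
        · exact hiΓ
        · exact h0.2 j hj
      · rw [pre_erase_self]
        rcases ((pre a s).erase v).eq_empty_or_nonempty with h1 | h1
        · exact Or.inl h1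
        · exact Or.inr ((hΓ i).2 _ hiΓ _ (Finset.erase_subset _ _) h1)
      · rw [pre_insert_of_ne a _ (b i) (fun v => hab v i)]; exact hc
    · rw [h _ (pre_erase_of_ne _ _ _ (fun v => (hab v j))), sub_self]
      exact Submodule.zero_mem _

lemma retract (hab : ∀ v i, a v ≠ b i) (hsur : ∀ w, (∃ v, a v = w) ∨ ∃ i, b i = w)
    (hΓ : ∀ i, IsComplex (Γ i)) {σ : Finset ι} (m : ℕ) : ∀ {c : Finset W →₀ K}
    (_ : c ∈ Finsupp.supported K K (JL a b Γ σ m))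
    (_ : dd K W c ∈ Finsupp.supported K K {s : Finset W | pre a s = ∅}),
    ∃ y ∈ Finsupp.supported K K (JJ a b Γ σ),
      c - dd K W y ∈ Finsupp.supported K K (JL a b Γ σ 0) := by
  induction m with
  | zero => 
    intro c hc _
    exact ⟨0, Submodule.zero_mem _, by simpa using hc⟩
  | succ m ih =>
    intro c hc hdc
    have h1 : hh K a b Γ σ (dd K W c) = 0 := 
      eq_on_supported (hh K a b Γ σ) 0 (fun s hs => hh_zero hΓ hs) hdc
    have h2 : c - dd K W (hh K a b Γ σ c) ∈ Finsupp.supported K K (JL a b Γ σ m) := by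
      have := map_mem_supported (LinearMap.id - dd K W ∘ₗ hh K a b Γ σ - hh K a b Γ σ ∘ₗ dd K W)
        (fun s hs => EE_single_mem hab hsur hΓ hs) hc
      simpa [h1] using this
    obtain ⟨y, hy, hy'⟩ := ih h2 (by rwa [map_sub, dd_dd, sub_zero])
    refine ⟨hh K a b Γ σ c + y, Submodule.add_mem _ ?_ hy, ?_⟩
    · exact map_mem_supported _ (fun s hs => Finsupp.supported_mono (fun t ht => ht.1) 
        (hh_single_mem hab hΓ hs.1 le_rfl)) hc
    · rwa [map_add, ← sub_sub]

lemma retract' (hab : ∀ v i, a v ≠ b i) (hsur : ∀ w, (∃ v, a v = w) ∨ ∃ i, b i = w)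
    (hΓ : ∀ i, IsComplex (Γ i)) {σ : Finset ι} {c : Finset W →₀ K}
    (hc : c ∈ Finsupp.supported K K (JJ a b Γ σ))
    (hdc : dd K W c ∈ Finsupp.supported K K {s : Finset W | pre a s = ∅}) :
    ∃ y ∈ Finsupp.supported K K (JJ a b Γ σ),
      c - dd K W y ∈ Finsupp.supported K K {s : Finset W | s ∈ JJ a b Γ σ ∧ pre a s = ∅} := by
  obtain ⟨y, hy, hy'⟩ := retract hab hsur hΓ (Fintype.card VV) (c := c) (σ := σ)
    (Finsupp.supported_mono
      (show JJ a b Γ σ ⊆ JL a b Γ σ _ from fun s hs => ⟨hs, Finset.card_le_univ _⟩) hc) hdc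
  exact ⟨y, hy, Finsupp.supported_mono
    (show JL a b Γ σ 0 ⊆ {s : Finset W | s ∈ JJ a b Γ σ ∧ pre a s = ∅} from
      fun s hs => ⟨hs.1, by simpa using hs.2⟩) hy'⟩

lemma build_step (hab : ∀ v i, a v ≠ b i) (hsur : ∀ w, (∃ v, a v = w) ∨ ∃ i, b i = w)
    (hΓ : ∀ i, IsComplex (Γ i)) (f : (Finset ι →₀ K) →ₗ[K] (Finset VV →₀ K))
    (D : (Finset ι →₀ K) →ₗ[K] (Finset W →₀ K)) (k : ℕ)
    (ih : ∀ σ, (σ = ∅ ∨ σ ∈ nerveC Γ) → σ.card ≤ k →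
      f (Finsupp.single σ 1) ∈ Finsupp.supported K K
        {τ : Finset VV | (τ = ∅ ∨ ∃ i ∈ σ, τ ∈ Γ i) ∧ τ.card = σ.card} ∧
      D (Finsupp.single σ 1) ∈ Finsupp.supported K K (JJ a b Γ σ) ∧
      dd K VV (f (Finsupp.single σ 1)) = f (dd K ι (Finsupp.single σ 1)) ∧
      dd K W (D (Finsupp.single σ 1)) + D (dd K ι (Finsupp.single σ 1)) =
        push K b (Finsupp.single σ 1) - push K a (f (Finsupp.single σ 1)))
    (σ : Finset ι) (hσ : σ ∈ nerveC Γ) (hk : σ.card = k + 1)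
    (hv : ∀ z ∈ Finsupp.supported K K
        {τ : Finset VV | (τ = ∅ ∨ ∃ i ∈ σ, τ ∈ Γ i) ∧ τ.card + 1 = σ.card}, dd K VV z = 0 →
      ∃ y ∈ Finsupp.supported K K
        {τ : Finset VV | (∃ i ∈ σ, τ ∈ Γ i) ∧ τ.card = σ.card}, dd K VV y = z) :
    ∃ p : (Finset VV →₀ K) × (Finset W →₀ K), 
      p.1 ∈ Finsupp.supported K K
        {τ : Finset VV | (τ = ∅ ∨ ∃ i ∈ σ, τ ∈ Γ i) ∧ τ.card = σ.card} ∧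
      p.2 ∈ Finsupp.supported K K (JJ a b Γ σ) ∧
      dd K VV p.1 = f (dd K ι (Finsupp.single σ 1)) ∧
      dd K W p.2 + D (dd K ι (Finsupp.single σ 1)) =
        push K b (Finsupp.single σ 1) - push K a p.1 := by
  set x := dd K ι (Finsupp.single σ 1) with hx
  have hxs : x ∈ Finsupp.supported K K {ρ : Finset ι | ρ ⊆ σ ∧ (ρ = ∅ ∨ ρ ∈ nerveC Γ) ∧ 
      ρ.card = k} := by
    refine dd_mem (P := {σ}) ?_ (Finsupp.single_mem_supported K _ (by simp))
    rintro t (ht : t = σ) v hv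
    rw [ht] at hv ⊢
    refine ⟨Finset.erase_subset _ _, nerve_mono hσ (Finset.erase_subset _ _), ?_⟩
    rw [Finset.card_erase_of_mem hv, hk]; rfl
  have hddx : dd K ι x = 0 := dd_dd _
  have hfx : f x ∈ Finsupp.supported K K
        {τ : Finset VV | (τ = ∅ ∨ ∃ i ∈ σ, τ ∈ Γ i) ∧ τ.card + 1 = σ.card} := by
    refine map_mem_supported f (fun ρ hρ => ?_) hxs
    refine Finsupp.supported_mono ?_ (ih ρ hρ.2.1 hρ.2.2.le).1
    rintro τ ⟨h1, h2⟩
    refine ⟨h1.imp id ?_, ?_⟩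
    · rintro ⟨i, hi, h⟩
      exact ⟨i, hρ.1 hi, h⟩
    · rw [h2, hρ.2.2, hk]
  have hDx : D x ∈ Finsupp.supported K K (JJ a b Γ σ) := by
    refine map_mem_supported D (fun ρ hρ => ?_) hxs
    exact Finsupp.supported_mono (JJ_mono hρ.1) (ih ρ hρ.2.1 hρ.2.2.le).2.1
  have hdf : dd K VV (f x) = f (dd K ι x) :=
    eq_on_supported (dd K VV ∘ₗ f) (f ∘ₗ dd K ι)
      (fun ρ hρ => (ih ρ hρ.2.1 hρ.2.2.le).2.2.1) hxs
  have hdD : dd K W (D x) + D (dd K ι x) = push K b x - push K a (f x) :=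
    eq_on_supported (dd K W ∘ₗ D + D ∘ₗ dd K ι) (push K b - push K a ∘ₗ f)
      (fun ρ hρ => (ih ρ hρ.2.1 hρ.2.2.le).2.2.2) hxs
  rw [hddx, map_zero] at hdf
  rw [hddx, map_zero, add_zero] at hdD
  obtain ⟨y, hy, hyx⟩ := hv _ hfx hdf
  have hσJ : σ.map b.toEmbedding ∈ JJ a b Γ σ := by
    refine ⟨by rw [pre_map], ?_, ?_⟩
    · rw [pre_map]; exact Or.inr hσ
    · left; exact pre_map_of_ne a b hab σ
  set c := push K b (Finsupp.single σ 1) - push K a y - D x with hc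
  have hcJ : c ∈ Finsupp.supported K K (JJ a b Γ σ) := by
    refine Submodule.sub_mem _ (Submodule.sub_mem _ ?_ ?_) hDx
    · rw [push_single]; exact Finsupp.single_mem_supported K _ hσJ
    · refine map_mem_supported _ (fun τ hτ => ?_) hy
      rw [push_single]
      refine Finsupp.single_mem_supported K _ ?_
      have h0 : pre b (τ.map a.toEmbedding) = ∅ := pre_map_of_ne b a (fun i v => (hab v i).symm) τ
      refine ⟨by simp [h0], by simp [h0], ?_⟩
      rw [h0, pre_map]
      exact Or.inr ⟨hτ.1, by simp⟩
  have hdc : dd K W c = 0 := by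
    rw [hc, map_sub, map_sub, ← push_dd, ← push_dd, hyx, ← hx, hdD, sub_self]
  obtain ⟨y', hy', hcy⟩ := retract' hab hsur hΓ hcJ (by rw [hdc]; exact Submodule.zero_mem _)
  obtain ⟨i, hi⟩ := hσ.1
  have h1 := dd_cone (b i) (c - dd K W y')
  rw [map_sub (dd K W) c, dd_dd, hdc, sub_zero, map_zero, add_zero] at h1
  refine ⟨(y, y' + cone K (b i) (c - dd K W y')), ?_, ?_, hyx, ?_⟩
  · refine Finsupp.supported_mono ?_ hy
    rintro τ ⟨h2, h3⟩
    exact ⟨Or.inr h2, h3⟩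
  · refine Submodule.add_mem _ hy' (cone_mem ?_ hcy)
    rintro s ⟨hs, hs0⟩ _
    refine JJ_insert hab hs hi ?_ (Or.inl hs0)
    refine (nerve_mono hσ (Finset.insert_subset hi hs.1)).resolve_left (by simp)
  · change dd K W (y' + cone K (b i) (c - dd K W y')) + D x = _
    rw [map_add, h1, hc]
    abel

lemma build (hab : ∀ v i, a v ≠ b i) (hsur : ∀ w, (∃ v, a v = w) ∨ ∃ i, b i = w)
    (hΓ : ∀ i, IsComplex (Γ i)) (n : ℕ)
    (hv : ∀ σ ∈ nerveC Γ, σ.card ≤ n → ∀ z ∈ Finsupp.supported K K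
        {τ : Finset VV | (τ = ∅ ∨ ∃ i ∈ σ, τ ∈ Γ i) ∧ τ.card + 1 = σ.card}, dd K VV z = 0 →
      ∃ y ∈ Finsupp.supported K K
        {τ : Finset VV | (∃ i ∈ σ, τ ∈ Γ i) ∧ τ.card = σ.card}, dd K VV y = z) (k : ℕ) :
    k ≤ n → ∃ (f : (Finset ι →₀ K) →ₗ[K] (Finset VV →₀ K))
      (D : (Finset ι →₀ K) →ₗ[K] (Finset W →₀ K)),
      ∀ σ, (σ = ∅ ∨ σ ∈ nerveC Γ) → σ.card ≤ k →
      f (Finsupp.single σ 1) ∈ Finsupp.supported K K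
        {τ : Finset VV | (τ = ∅ ∨ ∃ i ∈ σ, τ ∈ Γ i) ∧ τ.card = σ.card} ∧
      D (Finsupp.single σ 1) ∈ Finsupp.supported K K (JJ a b Γ σ) ∧
      dd K VV (f (Finsupp.single σ 1)) = f (dd K ι (Finsupp.single σ 1)) ∧
      dd K W (D (Finsupp.single σ 1)) + D (dd K ι (Finsupp.single σ 1)) =
        push K b (Finsupp.single σ 1) - push K a (f (Finsupp.single σ 1)) := by
  induction k with
  | zero =>
    intro _
    refine ⟨Finsupp.linearCombination K (fun _ => Finsupp.single ∅ 1), 0, ?_⟩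
    intro σ _ hσ
    obtain rfl : σ = ∅ := by simpa using hσ
    refine ⟨?_, Submodule.zero_mem _, ?_, ?_⟩
    · rw [Finsupp.linearCombination_single, one_smul]
      exact Finsupp.single_mem_supported K _ (by simp)
    · simp [dd_single]
    · simp [push_single]
  | succ k ihk =>
    intro hkn
    obtain ⟨f, D, ih⟩ := ihk (by omega)
    have key : ∀ σ : Finset ι, ∃ p : (Finset VV →₀ K) × (Finset W →₀ K),
        (σ ∈ nerveC Γ ∧ σ.card = k + 1) → p.1 ∈ Finsupp.supported K K
        {τ : Finset VV | (τ = ∅ ∨ ∃ i ∈ σ, τ ∈ Γ i) ∧ τ.card = σ.card} ∧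
      p.2 ∈ Finsupp.supported K K (JJ a b Γ σ) ∧
      dd K VV p.1 = f (dd K ι (Finsupp.single σ 1)) ∧
      dd K W p.2 + D (dd K ι (Finsupp.single σ 1)) =
        push K b (Finsupp.single σ 1) - push K a p.1 := by
      intro σ
      by_cases h : σ ∈ nerveC Γ ∧ σ.card = k + 1
      · obtain ⟨p, hp⟩ := build_step hab hsur hΓ f D k ih σ h.1 h.2 (hv σ h.1 (by omega))
        exact ⟨p, fun _ => hp⟩
      · exact ⟨0, fun h' => absurd h' h⟩
    choose p hp using key
    let f' : (Finset ι →₀ K) →ₗ[K] (Finset VV →₀ K) := Finsupp.linearCombination K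
      (fun σ => if σ.card = k + 1 then (p σ).1 else f (Finsupp.single σ 1))
    let D' : (Finset ι →₀ K) →ₗ[K] (Finset W →₀ K) := Finsupp.linearCombination K
      (fun σ => if σ.card = k + 1 then (p σ).2 else D (Finsupp.single σ 1))
    have hf1 : ∀ σ : Finset ι, σ.card = k + 1 → f' (Finsupp.single σ 1) = (p σ).1 := by
      intro σ h; simp [f', h]
    have hD1 : ∀ σ : Finset ι, σ.card = k + 1 → D' (Finsupp.single σ 1) = (p σ).2 := by
      intro σ h; simp [D', h]
    have hf2 : ∀ σ : Finset ι, σ.card ≠ k + 1 → 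
        f' (Finsupp.single σ 1) = f (Finsupp.single σ 1) := by
      intro σ h; simp [f', h]
    have hD2 : ∀ σ : Finset ι, σ.card ≠ k + 1 → 
        D' (Finsupp.single σ 1) = D (Finsupp.single σ 1) := by
      intro σ h; simp [D', h]
    have hf3 : ∀ σ : Finset ι, σ.card ≤ k + 1 → 
        f' (dd K ι (Finsupp.single σ 1)) = f (dd K ι (Finsupp.single σ 1)) := by
      intro σ h
      rw [map_dd_single, map_dd_single]
      refine Finset.sum_congr rfl fun v hv => ?_
      rw [hf2]
      have := Finset.card_erase_add_one hv
      omega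
    have hD3 : ∀ σ : Finset ι, σ.card ≤ k + 1 → 
        D' (dd K ι (Finsupp.single σ 1)) = D (dd K ι (Finsupp.single σ 1)) := by
      intro σ h
      rw [map_dd_single, map_dd_single]
      refine Finset.sum_congr rfl fun v hv => ?_
      rw [hD2]
      have := Finset.card_erase_add_one hv
      omega
    refine ⟨f', D', fun σ hσ hc => ?_⟩
    rw [hf3 σ hc, hD3 σ hc]
    by_cases h : σ.card = k + 1
    · rw [hf1 σ h, hD1 σ h]
      have hσ' : σ ∈ nerveC Γ := hσ.resolve_left (by rintro rfl; simp at h)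
      exact hp σ ⟨hσ', h⟩
    · rw [hf2 σ h, hD2 σ h]
      exact ih σ hσ (by omega)

/-- main chain-level result -/
lemma main_chain (hab : ∀ v i, a v ≠ b i) (hsur : ∀ w, (∃ v, a v = w) ∨ ∃ i, b i = w)
    (hΓ : ∀ i, IsComplex (Γ i)) (n : ℕ) (hn : 1 ≤ n)
    (hv : ∀ σ ∈ nerveC Γ, σ.card ≤ n → ∀ z ∈ Finsupp.supported K K
        {τ : Finset VV | (τ = ∅ ∨ ∃ i ∈ σ, τ ∈ Γ i) ∧ τ.card + 1 = σ.card}, dd K VV z = 0 →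
      ∃ y ∈ Finsupp.supported K K
        {τ : Finset VV | (∃ i ∈ σ, τ ∈ Γ i) ∧ τ.card = σ.card}, dd K VV y = z) :
    ∃ f : (Finset ι →₀ K) →ₗ[K] (Finset VV →₀ K),
      ∀ z ∈ Finsupp.supported K K {σ : Finset ι | σ ∈ nerveC Γ ∧ σ.card = n}, dd K ι z = 0 →
        f z ∈ Finsupp.supported K K {τ : Finset VV | τ ∈ ⋃ i, Γ i ∧ τ.card = n} ∧
        dd K VV (f z) = 0 ∧
        ((∃ y ∈ Finsupp.supported K K {τ : Finset VV | τ ∈ ⋃ i, Γ i ∧ τ.card = n + 1},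
          dd K VV y = f z) →
          ∃ x ∈ Finsupp.supported K K {σ : Finset ι | σ ∈ nerveC Γ ∧ σ.card = n + 1},
            dd K ι x = z) := by
  obtain ⟨f, D, h⟩ := build (K := K) hab hsur hΓ n hv n le_rfl
  refine ⟨f, fun z hz hdz => ⟨?_, ?_, ?_⟩⟩
  · refine map_mem_supported f (fun σ hσ => ?_) hz
    refine Finsupp.supported_mono ?_ (h σ (Or.inr hσ.1) hσ.2.le).1
    rintro τ ⟨h1, h2⟩
    have h3 : τ.card = n := h2.trans hσ.2
    refine ⟨?_, h3⟩
    rcases h1 with rfl | ⟨i, _, hi⟩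
    · rw [Finset.card_empty] at h3; omega
    · exact Set.mem_iUnion.2 ⟨i, hi⟩
  · have := eq_on_supported (dd K VV ∘ₗ f) (f ∘ₗ dd K ι)
      (fun ρ hρ => (h ρ (Or.inr hρ.1) hρ.2.le).2.2.1) hz
    simpa [hdz] using this
  · rintro ⟨y, hy, hyz⟩
    have h1 := eq_on_supported (dd K W ∘ₗ D + D ∘ₗ dd K ι) (push K b - push K a ∘ₗ f)
      (fun ρ hρ => (h ρ (Or.inr hρ.1) hρ.2.le).2.2.2) hz
    simp only [LinearMap.add_apply, LinearMap.sub_apply, LinearMap.comp_apply, hdz, map_zero,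
      add_zero] at h1
    set c := D z + push K a y with hc
    have hdc : dd K W c = push K b z := by
      rw [hc, map_add, h1, ← push_dd, hyz, sub_add_cancel]
    have hcJ : c ∈ Finsupp.supported K K (JJ a b Γ Finset.univ) := by
      refine Submodule.add_mem _ ?_ ?_
      · refine map_mem_supported D (fun ρ hρ => ?_) hz
        exact Finsupp.supported_mono (JJ_mono (Finset.subset_univ _)) 
          (h ρ (Or.inr hρ.1) hρ.2.le).2.1
      · refine map_mem_supported _ (fun τ hτ => ?_) hy
        rw [push_single]
        refine Finsupp.single_mem_supported K _ ?_
        have h0 : pre b (τ.map a.toEmbedding) = ∅ :=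
          pre_map_of_ne b a (fun i v => (hab v i).symm) τ
        refine ⟨by simp [h0], by simp [h0], ?_⟩
        rw [h0, pre_map]
        obtain ⟨i, hi⟩ := Set.mem_iUnion.1 hτ.1
        exact Or.inr ⟨⟨i, Finset.mem_univ _, hi⟩, by simp⟩
    obtain ⟨y', hy', hcy⟩ := retract' hab hsur hΓ hcJ (by
      rw [hdc]
      refine map_mem_supported _ (fun σ hσ => ?_) hz
      rw [push_single]
      exact Finsupp.single_mem_supported K _ (pre_map_of_ne a b hab σ))
    have hx : ∃ x ∈ Finsupp.supported K K {σ : Finset ι | σ = ∅ ∨ σ ∈ nerveC Γ},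
        push K b x = c - dd K W y' := by
      let T : (Finset W →₀ K) →ₗ[K] (Finset ι →₀ K) := Finsupp.lmapDomain K K (pre b)
      refine ⟨T (c - dd K W y'), ?_, ?_⟩
      · refine map_mem_supported T (fun s hs => ?_) hcy
        simp only [T, Finsupp.lmapDomain_apply, Finsupp.mapDomain_single]
        exact Finsupp.single_mem_supported K _ hs.1.2.1
      · refine eq_on_supported (push K b ∘ₗ T) LinearMap.id (fun s hs => ?_) hcy
        simp only [T, LinearMap.comp_apply, Finsupp.lmapDomain_apply, Finsupp.mapDomain_single,
          push_single, LinearMap.id_apply]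
        congr 1
        ext w
        simp only [Finset.mem_map, mem_pre]
        constructor
        · rintro ⟨i, hi, rfl⟩; exact hi
        · intro hw
          rcases hsur w with ⟨v, rfl⟩ | ⟨i, rfl⟩
          · have := (mem_pre a s v).2 hw
            rw [hs.2] at this
            simp at this
          · exact ⟨i, hw, rfl⟩
    obtain ⟨x, hxs, hxc⟩ := hx
    have hdx : dd K ι x = z := by
      apply push_injective (K := K) b
      rw [push_dd, hxc, map_sub, dd_dd, sub_zero, hdc]
    refine ⟨proj K ι (n + 1) x, ?_, ?_⟩
    · refine map_mem_supported _ (fun σ hσ => ?_) hxs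
      rw [proj_single]
      split_ifs with hc
      · refine Finsupp.single_mem_supported K _ ⟨hσ.resolve_left ?_, hc⟩
        rintro rfl
        simp at hc
      · exact Submodule.zero_mem _
    · rw [← proj_dd, hdx]
      refine eq_on_supported (proj K ι n) LinearMap.id (fun σ hσ => ?_) hz
      rw [proj_single, if_pos hσ.2]
      rfl

end mixed

section convert
variable {K : Type*} [Field K] {α : Type*} [LinearOrder α]

variable (K α) in
/-- forget the cardinality -/
noncomputable def emb (n : ℕ) : Chains K α n →ₗ[K] (Finset α →₀ K) :=
  Finsupp.lmapDomain K K Subtype.val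

variable (K α) in
/-- restrict to a cardinality -/
noncomputable def unemb (n : ℕ) : (Finset α →₀ K) →ₗ[K] Chains K α n :=
  Finsupp.lcomapDomain Subtype.val Subtype.val_injective

lemma emb_injective (n : ℕ) : Function.Injective (emb K α n) :=
  Finsupp.mapDomain_injective Subtype.val_injective

lemma emb_single (n : ℕ) (s : {s : Finset α // s.card = n + 1}) (c : K) :
    emb K α n (Finsupp.single s c) = Finsupp.single s.1 c := by
  simp [emb]

lemma emb_unemb (n : ℕ) {P : Set (Finset α)} {x : Finset α →₀ K}
    (hx : x ∈ Finsupp.supported K K {s | s ∈ P ∧ s.card = n + 1}) :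
    emb K α n (unemb K α n x) = x := by
  refine Finsupp.mapDomain_comapDomain _ Subtype.val_injective _ ?_
  intro s hs
  exact ⟨⟨s, (hx hs).2⟩, rfl⟩

lemma emb_bdry (n : ℕ) (c : Chains K α (n + 1)) :
    emb K α n (bdry K K α n c) = dd K α (emb K α (n + 1) c) := by
  have : emb K α n ∘ₗ bdry K K α n = dd K α ∘ₗ emb K α (n + 1) := by
    ext1 s
    ext1
    simp only [LinearMap.comp_apply, Finsupp.lsingle_apply, emb_single, dd_single]
    rw [bdry, Finsupp.lsum_single, LinearMap.sum_apply, map_sum, ← Finset.sum_attach s.1]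
    refine Finset.sum_congr rfl fun v _ => ?_
    rw [LinearMap.smul_apply, map_zsmul, Finsupp.lsingle_apply, emb_single, sg]
    rw [Finsupp.smul_single]
    congr 1
    simp
  exact congrArg (fun T => T c) this

lemma dd_emb_zero (c : Chains K α 0) :
    dd K α (emb K α 0 c) = Finsupp.single ∅ (aug K K α c) := by
  have : dd K α ∘ₗ emb K α 0 = Finsupp.lsingle ∅ ∘ₗ aug K K α := by
    ext1 s
    ext1
    obtain ⟨s, hs⟩ := s
    obtain ⟨v, rfl⟩ := Finset.card_eq_one.1 hs
    simp [emb_single, dd_single, aug, sg, Finset.filter_singleton]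
  exact congrArg (fun T => T c) this

lemma mem_cycles_iff (n : ℕ) (c : Chains K α n) :
    c ∈ cycles K K α n ↔ dd K α (emb K α n c) = 0 := by
  cases n with
  | zero =>
    rw [dd_emb_zero, Finsupp.single_eq_zero]
    rfl
  | succ n =>
    rw [← emb_bdry, map_eq_zero_iff _ (emb_injective n)]
    rfl

lemma mem_chainsIn_iff (S : Set (Finset α)) (n : ℕ) (c : Chains K α n) :
    c ∈ chainsIn K K α S n ↔ 
      emb K α n c ∈ Finsupp.supported K K {s | s ∈ S ∧ s.card = n + 1} := by
  classical
  have h : (emb K α n c).support = c.support.image Subtype.val :=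
    Finsupp.mapDomain_support_of_injective Subtype.val_injective c
  rw [chainsIn, Finsupp.mem_supported, Finsupp.mem_supported, h]
  simp only [Finset.coe_image, Set.image_subset_iff]
  constructor
  · intro h s hs
    exact ⟨h hs, s.2⟩
  · intro h s hs
    exact (h hs).1

lemma mem_boundariesIn_iff (S : Set (Finset α)) (n : ℕ) (c : Chains K α n) :
    c ∈ boundariesIn K K α S n ↔ 
      ∃ y ∈ Finsupp.supported K K {s | s ∈ S ∧ s.card = n + 1 + 1}, dd K α y = emb K α n c := by
  rw [boundariesIn, Submodule.mem_map]
  constructor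
  · rintro ⟨y, hy, rfl⟩
    exact ⟨_, (mem_chainsIn_iff S _ y).1 hy, (emb_bdry n y).symm⟩
  · rintro ⟨y, hy, h⟩
    refine ⟨unemb K α (n + 1) y, ?_, ?_⟩
    · rw [mem_chainsIn_iff, emb_unemb _ hy]; exact hy
    · apply emb_injective (K := K) n
      rw [emb_bdry, emb_unemb _ hy, h]

lemma vanish_chain {S : Set (Finset α)} (hS : IsComplex S) (k : ℕ)
    (h : RedHVanish K K α S ((k : ℤ) - 1)) (z : Finset α →₀ K)
    (hz : z ∈ Finsupp.supported K K {s | (s = ∅ ∨ s ∈ S) ∧ s.card = k}) (hdz : dd K α z = 0) :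
    ∃ y ∈ Finsupp.supported K K {s | s ∈ S ∧ s.card = k + 1}, dd K α y = z := by
  cases k with
  | zero =>
    rw [RedHVanish, if_neg (by simp), if_pos (by simp)] at h
    obtain ⟨s, hs⟩ := h
    obtain ⟨v, hv⟩ := hS.1 s hs
    have hvS : {v} ∈ S := hS.2 s hs _ (by simpa using hv) (by simp)
    refine ⟨z ∅ • Finsupp.single {v} 1, ?_, ?_⟩
    · exact Submodule.smul_mem _ _ (Finsupp.single_mem_supported K _ ⟨hvS, by simp⟩)
    · rw [map_smul, dd_single]
      ext s
      by_cases hs0 : s = ∅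
      · simp [hs0, sg, Finset.filter_singleton]
      · have h1 : z s = 0 := by
          by_contra h2
          have := (hz (Finsupp.mem_support_iff.2 h2)).2
          exact hs0 (Finset.card_eq_zero.1 this)
        rw [h1]
        simp [Ne.symm hs0]
  | succ n =>
    have e : (((n + 1 : ℕ) : ℤ) - 1) = n := by push_cast; ring
    rw [e, RedHVanish, if_neg (by omega), if_neg (by omega), Int.toNat_natCast] at h
    have hz' : z ∈ Finsupp.supported K K {s | s ∈ S ∧ s.card = n + 1} := by
      refine Finsupp.supported_mono ?_ hz
      rintro s ⟨h1, h2⟩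
      refine ⟨h1.resolve_left ?_, h2⟩
      rintro rfl
      simp at h2
    have hc : unemb K α n z ∈ cyclesIn K K α S n := by
      refine ⟨(mem_cycles_iff n _).2 ?_, (mem_chainsIn_iff S n _).2 ?_⟩
      · rw [emb_unemb _ hz', hdz]
      · rw [emb_unemb _ hz']; exact hz'
    rw [Submodule.Quotient.subsingleton_iff] at h
    have : (⟨_, hc⟩ : cyclesIn K K α S n) ∈ Submodule.comap (cyclesIn K K α S n).subtype
      (boundariesIn K K α S n) := by rw [h]; exact Submodule.mem_top
    have := (mem_boundariesIn_iff S n _).1 (Submodule.mem_comap.1 this)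
    simpa only [Submodule.subtype_apply, emb_unemb _ hz'] using this

end convert

end NerveU

/-- Nerve theorem for unions: if `H̃_{|σ|-2}(⋃σ) = 0` for every simplex `σ` of the nerve
of dimension at most `ℓ`, then `dim H̃_ℓ(N(Γ)) ≤ dim H̃_ℓ(X)`. -/
theorem nerve_theorem_for_unions {V : Type u} [LinearOrder V] [Fintype V]
    (F : Type u) [Field F] {N : ℕ}
    (X : Set (Finset V)) (hX : IsComplex X)
    (Γ : Fin N → Set (Finset V))
    (hΓ : ∀ i, IsComplex (Γ i) ∧ Γ i ⊆ X)
    (hcover : (⋃ i, Γ i) = X)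
    (ℓ : ℤ) (hℓ1 : -1 ≤ ℓ) (hℓ2 : ℓ < N)
    (hunion : ∀ σ ∈ nerveC Γ, (σ.card : ℤ) - 1 ≤ ℓ →
      RedHVanish F F V (⋃ i ∈ σ, Γ i) ((σ.card : ℤ) - 2)) :
    redHRank F F (Fin N) (nerveC Γ) ℓ ≤ redHRank F F V X ℓ := by
  classical
  by_cases hneg : ℓ = -1
  · subst hneg
    simp only [redHRank, lt_irrefl, if_false, if_true]
    by_cases hN : (nerveC Γ).Nonempty
    · rw [if_pos hN]; exact zero_le
    · rw [if_neg hN, if_neg]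
      rintro ⟨τ, hτ⟩
      rw [← hcover] at hτ
      obtain ⟨i, hi⟩ := Set.mem_iUnion.1 hτ
      exact hN ⟨{i}, NerveU.nerve_of_mem (τ := τ) (by simp) (by simpa using hi)⟩
  obtain ⟨n, rfl⟩ : ∃ n : ℕ, ℓ = n := ⟨ℓ.toNat, by omega⟩
  rw [redHRank, redHRank, if_neg (by omega), if_neg (by omega), if_neg (by omega),
    if_neg (by omega), Int.toNat_natCast]
  let a : V ↪o V ⊕ₗ Fin N := OrderEmbedding.ofStrictMono _ Sum.Lex.inl_strictMono
  let b : Fin N ↪o V ⊕ₗ Fin N := OrderEmbedding.ofStrictMono _ Sum.Lex.inr_strictMono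
  have hab : ∀ v i, a v ≠ b i := by
    intro v i h
    exact Sum.inl_ne_inr (toLex.injective h)
  have hsur : ∀ w, (∃ v, a v = w) ∨ ∃ i, b i = w := by
    intro w
    rcases hw : ofLex w with v | i
    · exact Or.inl ⟨v, by rw [← toLex_ofLex w, hw]; rfl⟩
    · exact Or.inr ⟨i, by rw [← toLex_ofLex w, hw]; rfl⟩
  obtain ⟨f, hf⟩ := NerveU.main_chain (K := F) hab hsur (fun i => (hΓ i).1) (n + 1) (by omega) (by
    intro σ hσ hc z hz hdz
    obtain ⟨k, hk⟩ : ∃ k, σ.card = k + 1 := ⟨σ.card - 1, by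
      have := Finset.card_pos.2 hσ.1; omega⟩
    have hS : IsComplex (⋃ i ∈ σ, Γ i) := by
      constructor
      · intro s hs
        simp only [Set.mem_iUnion] at hs
        obtain ⟨i, _, hi⟩ := hs
        exact (hΓ i).1.1 s hi
      · intro s hs t ht ht0
        simp only [Set.mem_iUnion] at hs ⊢
        obtain ⟨i, hiσ, hi⟩ := hs
        exact ⟨i, hiσ, (hΓ i).1.2 s hi t ht ht0⟩
    have hv := hunion σ hσ (by omega)
    rw [show (σ.card : ℤ) - 2 = (k : ℤ) - 1 by omega] at hv
    obtain ⟨y, hy, hyz⟩ := NerveU.vanish_chain hS k hv z (by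
      refine Finsupp.supported_mono ?_ hz
      rintro τ ⟨h1, h2⟩
      refine ⟨h1.imp id ?_, by omega⟩
      simp) hdz
    refine ⟨y, Finsupp.supported_mono ?_ hy, hyz⟩
    rintro τ ⟨h1, h2⟩
    refine ⟨by simpa using h1, by omega⟩)
  rw [hcover] at hf
  have hz : ∀ z : cyclesIn F F (Fin N) (nerveC Γ) n, _ := fun z =>
    hf (NerveU.emb F (Fin N) n z) ((NerveU.mem_chainsIn_iff _ n _).1 z.2.2)
      ((NerveU.mem_cycles_iff n _).1 z.2.1)
  let φ : cyclesIn F F (Fin N) (nerveC Γ) n →ₗ[F] cyclesIn F F V X n :=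
    LinearMap.codRestrict _ (NerveU.unemb F V n ∘ₗ f ∘ₗ NerveU.emb F (Fin N) n ∘ₗ
      (cyclesIn F F (Fin N) (nerveC Γ) n).subtype) (by
      intro z
      obtain ⟨h1, h2, _⟩ := hz z
      refine ⟨(NerveU.mem_cycles_iff n _).2 ?_, (NerveU.mem_chainsIn_iff _ n _).2 ?_⟩
      · simp only [LinearMap.comp_apply, Submodule.subtype_apply]
        rw [NerveU.emb_unemb n h1, h2]
      · simp only [LinearMap.comp_apply, Submodule.subtype_apply]
        rw [NerveU.emb_unemb n h1]
        exact h1)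
  let ψ := (Submodule.mkQ (Submodule.comap (cyclesIn F F V X n).subtype
    (boundariesIn F F V X n))) ∘ₗ φ
  have hker : LinearMap.ker ψ ≤ Submodule.comap (cyclesIn F F (Fin N) (nerveC Γ) n).subtype
    (boundariesIn F F (Fin N) (nerveC Γ) n) := by
    intro z hzk
    have h1 : φ z ∈ Submodule.comap (cyclesIn F F V X n).subtype (boundariesIn F F V X n) := by
      rw [← Submodule.Quotient.mk_eq_zero]
      exact hzk
    have h2 := (NerveU.mem_boundariesIn_iff _ n _).1 (Submodule.mem_comap.1 h1)
    obtain ⟨h3, _, h4⟩ := hz z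
    refine Submodule.mem_comap.2 ((NerveU.mem_boundariesIn_iff _ n _).2 (h4 ?_))
    have h5 : NerveU.emb F V n ((cyclesIn F F V X n).subtype (φ z)) =
      f (NerveU.emb F (Fin N) n z) := NerveU.emb_unemb n h3
    rwa [h5] at h2
  calc Module.rank F (redH F F (Fin N) (nerveC Γ) n)
      ≤ Module.rank F (_ ⧸ LinearMap.ker ψ) :=
        LinearMap.rank_le_of_surjective (Submodule.factor hker) (Submodule.factor_surjective hker)
    _ = Module.rank F (LinearMap.range ψ) := (LinearMap.quotKerEquivRange ψ).rank_eq
    _ ≤ _ := Submodule.rank_le _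
end

section
/- Let X be a finite abstract simplicial complex, Γ a finite collection of subcomplexes covering X, F a field, and k, ℓ integers with -1 ≤ k ≤ ℓ < |Γ|. Suppose (1) H̃_{k-|σ|}(⋂σ, F) = 0 for every simplex σ of the nerve N(Γ) of dimension at most k, and (2) H̃_{|σ|-2}(⋃σ, F) = 0 for every simplex σ of N(Γ) of dimension at least k+1 and at most ℓ. Then dim H̃_ℓ(N(Γ), F) ≤ dim H̃_ℓ(X, F). -/
open Finset

variable (R : Type*) [CommRing R] (A : Type*) [AddCommGroup A] [Module R A]
variable (V : Type*) [LinearOrder V]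

namespace MixedNerve

set_option linter.unusedSectionVars false

section Core

variable {F : Type*} [Field F] {W : Type*} [LinearOrder W] [Fintype W]

/-- The sign of the vertex `v` relative to the face `s`. -/
def ep (F : Type*) [Field F] {W : Type*} [LinearOrder W] (v : W) (s : Finset W) : F :=
  (-1) ^ (s.filter (fun w => w < v)).card

lemma ep_mul_self (v : W) (s : Finset W) : ep F v s * ep F v s = 1 := by
  unfold ep
  rw [← mul_pow]; simp

lemma ep_insert {v w : W} {s : Finset W} (hv : v ∉ s) :
    ep F w (insert v s) = if v < w then - ep F w s else ep F w s := by
  unfold ep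
  rw [Finset.filter_insert]
  split_ifs with h
  · rw [Finset.card_insert_of_notMem (by simp [hv]), pow_succ]; ring
  · rfl

lemma ep_anti {v w : W} {s : Finset W} (hv : v ∉ s) (hw : w ∉ s) (hne : v ≠ w) :
    ep F v s * ep F w (insert v s) = - (ep F w s * ep F v (insert w s)) := by
  rw [ep_insert hv, ep_insert hw]
  rcases lt_or_gt_of_ne hne with h | h
  · rw [if_pos h, if_neg h.le.not_gt]; ring
  · rw [if_pos h, if_neg h.le.not_gt]; ring

/-- The boundary operator on all (augmented) chains, written on functions. -/
def dd (F : Type*) [Field F] (W : Type*) [LinearOrder W] [Fintype W] :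
    (Finset W → F) →ₗ[F] (Finset W → F) where
  toFun f s := ∑ v ∈ sᶜ, ep F v s * f (insert v s)
  map_add' f g := by
    ext s; simp [mul_add, Finset.sum_add_distrib]
  map_smul' c f := by
    ext s; simp only [Pi.smul_apply, smul_eq_mul, RingHom.id_apply, Finset.mul_sum]
    exact Finset.sum_congr rfl fun _ _ => by ring

lemma dd_apply (f : Finset W → F) (s : Finset W) :
    dd F W f s = ∑ v ∈ sᶜ, ep F v s * f (insert v s) := rfl

lemma dd_dd (f : Finset W → F) : dd F W (dd F W f) = 0 := by
  ext s
  simp only [dd_apply, Finset.mul_sum, Pi.zero_apply]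
  rw [Finset.sum_sigma']
  refine Finset.sum_involution (fun x _ => ⟨x.2, x.1⟩) ?_ ?_ ?_ ?_
  · rintro ⟨v, w⟩ h
    simp only [Finset.mem_sigma, Finset.mem_compl, Finset.mem_insert, not_or] at h
    obtain ⟨hv, hwv, hw⟩ := h
    have := ep_anti (F := F) hv hw (Ne.symm hwv)
    simp only
    rw [← mul_assoc, this, Finset.insert_comm]; ring
  · rintro ⟨v, w⟩ h _
    simp only [Finset.mem_sigma, Finset.mem_compl, Finset.mem_insert, not_or] at h
    intro e
    simp only [Sigma.mk.injEq] at e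
    exact h.2.1 e.1
  · rintro ⟨v, w⟩ h
    simp only [Finset.mem_sigma, Finset.mem_compl, Finset.mem_insert, not_or] at h ⊢
    exact ⟨h.2.2, Ne.symm h.2.1, h.1⟩
  · rintro ⟨v, w⟩ h
    rfl

/-- The cone operator. -/
def cone (v : W) (f : Finset W → F) : Finset W → F :=
  fun t => if v ∈ t then ep F v t * f (t.erase v) else 0

lemma dd_cone (v : W) (f : Finset W → F) (s : Finset W) :
    dd F W (cone v f) s + cone v (dd F W f) s = f s := by
  by_cases hv : v ∈ s
  · obtain ⟨t, ht, rfl⟩ : ∃ t, v ∉ t ∧ insert v t = s :=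
      ⟨s.erase v, by simp, Finset.insert_erase hv⟩
    simp only [cone, dd_apply, hv, if_true, Finset.erase_insert ht]
    have hc : tᶜ = insert v (insert v t)ᶜ := by
      ext w; simp only [Finset.mem_compl, Finset.mem_insert]
      by_cases h : w = v
      · subst h; simp [ht]
      · simp [h]
    rw [hc, Finset.sum_insert (by simp), mul_add, ← mul_assoc]
    have h1 : ep F v (insert v t) * ep F v t = 1 := by
      rw [ep_insert ht, if_neg (lt_irrefl _), ep_mul_self]
    rw [h1, one_mul, Finset.mul_sum, add_left_comm, ← Finset.sum_add_distrib]
    rw [Finset.sum_eq_zero, add_zero]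
    intro w hw
    simp only [Finset.mem_compl, Finset.mem_insert, not_or] at hw
    obtain ⟨hwv, hwt⟩ := hw
    have h2 : (insert w (insert v t)).erase v = insert w t := by
      rw [Finset.insert_comm, Finset.erase_insert]; simp [ht, Ne.symm hwv]
    rw [if_pos (by simp), h2, ← mul_assoc, ← mul_assoc, ← add_mul]
    have h3 : ep F v (insert w (insert v t)) = ep F v (insert w t) := by
      rw [Finset.insert_comm, ep_insert (by simp [ht, Ne.symm hwv]), if_neg (lt_irrefl _)]
    have h4 : ep F v (insert v t) = ep F v t := by
      rw [ep_insert ht, if_neg (lt_irrefl _)]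
    rw [h3, h4]
    rw [ep_insert ht, ep_insert hwt]
    rcases lt_or_gt_of_ne hwv with h | h
    · rw [if_pos h, if_neg h.le.not_gt]; ring
    · rw [if_pos h, if_neg h.le.not_gt]; ring
  · rw [dd_apply, Finset.sum_eq_single v]
    · simp only [cone, Finset.mem_insert_self, if_true, hv, if_false, add_zero,
        Finset.erase_insert hv]
      rw [← mul_assoc, ep_insert hv, if_neg (lt_irrefl _), ep_mul_self, one_mul]
    · intro w hw hwv
      simp [cone, Ne.symm hwv, hv]
    · intro h; simp [hv] at h

end Core

section Double

variable {F : Type*} [Field F] {ι : Type*} [LinearOrder ι] [Fintype ι]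
  {V : Type*} [LinearOrder V] [Fintype V]

/-- The total differential of the double complex. -/
def DD (F : Type*) [Field F] (ι : Type*) [LinearOrder ι] [Fintype ι]
    (V : Type*) [LinearOrder V] [Fintype V] :
    (Finset ι → Finset V → F) →ₗ[F] (Finset ι → Finset V → F) where
  toFun f τ s := dd F ι (fun τ' => f τ' s) τ + (-1) ^ τ.card * dd F V (f τ) s
  map_add' f g := by
    ext τ s
    change dd F ι ((fun τ' => f τ' s) + (fun τ' => g τ' s)) τ +
      (-1) ^ τ.card * dd F V (f τ + g τ) s = _
    rw [map_add, map_add]; simp only [Pi.add_apply]; ring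
  map_smul' c f := by
    ext τ s
    change dd F ι (c • (fun τ' => f τ' s)) τ + (-1) ^ τ.card * dd F V (c • f τ) s = _
    rw [map_smul, map_smul]
    simp only [Pi.smul_apply, smul_eq_mul, RingHom.id_apply]; ring

lemma DD_apply (f : Finset ι → Finset V → F) (τ : Finset ι) (s : Finset V) :
    DD F ι V f τ s = dd F ι (fun τ' => f τ' s) τ + (-1) ^ τ.card * dd F V (f τ) s := rfl

lemma DD_DD (f : Finset ι → Finset V → F) : DD F ι V (DD F ι V f) = 0 := by
  ext τ s
  rw [DD_apply]
  have h1 : (fun τ' => DD F ι V f τ' s) = dd F ι (fun τ' => f τ' s) +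
      fun τ' => (-1) ^ τ'.card * dd F V (f τ') s := rfl
  have h2 : DD F ι V f τ = (fun s' => dd F ι (fun τ' => f τ' s') τ) +
      ((-1 : F) ^ τ.card) • dd F V (f τ) := rfl
  rw [h1, h2, map_add, map_add, map_smul, dd_dd, dd_dd]
  simp only [zero_add, smul_zero, add_zero, Pi.zero_apply]
  simp only [dd_apply, Finset.mul_sum]
  rw [Finset.sum_comm, ← Finset.sum_add_distrib]
  refine Finset.sum_eq_zero fun v _ => ?_
  rw [← Finset.sum_add_distrib]
  refine Finset.sum_eq_zero fun i hi => ?_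
  rw [Finset.card_insert_of_notMem (by simpa using hi)]
  ring

/-- Chains supported on a predicate. -/
def sup2 (F : Type*) [Field F] {ι V : Type*} (P : Finset ι → Finset V → Prop) :
    Submodule F (Finset ι → Finset V → F) where
  carrier := {f | ∀ τ s, f τ s ≠ 0 → P τ s}
  zero_mem' := by intro τ s h; simp at h
  add_mem' := by
    intro f g hf hg τ s h
    by_cases h1 : f τ s = 0
    · exact hg τ s (by intro h2; simp [h1, h2] at h)
    · exact hf τ s h1
  smul_mem' := by
    intro c f hf τ s h
    exact hf τ s (by intro h2; simp [h2] at h)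

lemma mem_sup2 {P : Finset ι → Finset V → Prop} {f : Finset ι → Finset V → F} :
    f ∈ sup2 F P ↔ ∀ τ s, f τ s ≠ 0 → P τ s := Iff.rfl

lemma dd_ne_zero {f : Finset V → F} {s : Finset V} (h : dd F V f s ≠ 0) :
    ∃ v ∉ s, f (insert v s) ≠ 0 := by
  by_contra! hc
  apply h
  rw [dd_apply]
  exact Finset.sum_eq_zero fun v hv => by rw [hc v (by simpa using hv), mul_zero]

lemma DD_ne_zero {f : Finset ι → Finset V → F} {τ : Finset ι} {s : Finset V}
    (h : DD F ι V f τ s ≠ 0) :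
    (∃ i ∉ τ, f (insert i τ) s ≠ 0) ∨ (∃ v ∉ s, f τ (insert v s) ≠ 0) := by
  by_contra! hc
  apply h
  rw [DD_apply]
  have h1 : dd F ι (fun τ' => f τ' s) τ = 0 := by
    by_contra h
    obtain ⟨i, hi, h'⟩ := dd_ne_zero h
    exact h' (hc.1 i hi)
  have h2 : dd F V (f τ) s = 0 := by
    by_contra h
    obtain ⟨i, hi, h'⟩ := dd_ne_zero h
    exact h' (hc.2 i hi)
  rw [h1, h2]; simp

/-- Chains of a single complex, supported on a predicate. -/
def sup1 (F : Type*) [Field F] {V : Type*} (P : Finset V → Prop) :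
    Submodule F (Finset V → F) where
  carrier := {f | ∀ s, f s ≠ 0 → P s}
  zero_mem' := by intro s h; simp at h
  add_mem' := by
    intro f g hf hg s h
    by_cases h1 : f s = 0
    · exact hg s (by intro h2; simp [h1, h2] at h)
    · exact hf s h1
  smul_mem' := by
    intro c f hf s h
    exact hf s (by intro h2; simp [h2] at h)

lemma mem_sup1 {P : Finset V → Prop} {f : Finset V → F} :
    f ∈ sup1 F P ↔ ∀ s, f s ≠ 0 → P s := Iff.rfl

/-- Augmented chains on faces with `m` vertices. -/
def AC (F : Type*) [Field F] {V : Type*} (S : Set (Finset V)) (m : ℕ) :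
    Submodule F (Finset V → F) :=
  sup1 F (fun s => (s = ∅ ∨ s ∈ S) ∧ s.card = m)

/-- Exactness of the augmented chain complex at faces with `m` vertices. -/
def Ex (F : Type*) [Field F] {V : Type*} [LinearOrder V] [Fintype V]
    (S : Set (Finset V)) (m : ℕ) : Prop :=
  ∀ f ∈ AC F S m, dd F V f = 0 → ∃ g ∈ AC F S (m + 1), dd F V g = f

lemma Ex.section_exists {S : Set (Finset V)} {m : ℕ} (h : Ex F S m) :
    ∃ g : (Finset V → F) →ₗ[F] (Finset V → F), (∀ f, g f ∈ AC F S (m + 1)) ∧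
      ∀ f ∈ AC F S m, dd F V f = 0 → dd F V (g f) = f := by
  let T : AC F S (m + 1) →ₗ[F] (Finset V → F) := (dd F V).comp (AC F S (m + 1)).subtype
  obtain ⟨g0, hg0⟩ := T.rangeRestrict.exists_rightInverse_of_surjective
    T.range_rangeRestrict
  obtain ⟨g1, hg1⟩ := LinearMap.exists_extend g0
  refine ⟨(AC F S (m + 1)).subtype.comp g1, fun f => (g1 f).2, fun f hf hd => ?_⟩
  obtain ⟨y, hy, hyf⟩ := h f hf hd
  have hr : f ∈ LinearMap.range T := ⟨⟨y, hy⟩, hyf⟩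
  have e1 : g1 f = g0 ⟨f, hr⟩ := by
    rw [← hg1]; rfl
  have e2 := congrArg (fun φ => (φ ⟨f, hr⟩ : Finset V → F)) (congrArg (fun φ => (LinearMap.range T).subtype.comp φ) hg0)
  simp only [LinearMap.comp_apply] at e2 ⊢
  rw [e1]
  exact e2

end Double
section Main

variable {F : Type*} [Field F] {ι : Type*} [LinearOrder ι] [Fintype ι]
  {V : Type*} [LinearOrder V] [Fintype V]

/-- The (augmented) faces of the join-like complex, restricted to the subfamily `σ`. -/
def JJ (Γ : ι → Set (Finset V)) (σ τ : Finset ι) (s : Finset V) : Prop :=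
  τ ⊆ σ ∧ (τ = ∅ ∨ τ ∈ nerveC Γ) ∧
    (s = ∅ ∨ ((∃ i ∈ σ, s ∈ Γ i) ∧ ∀ i ∈ τ, s ∈ Γ i))

lemma nerve_down {Γ : ι → Set (Finset V)} {σ τ : Finset ι} (h : σ ∈ nerveC Γ) (hτ : τ ⊆ σ) :
    τ = ∅ ∨ τ ∈ nerveC Γ := by
  rcases τ.eq_empty_or_nonempty with h0 | h0
  · exact Or.inl h0
  · refine Or.inr ⟨h0, ?_⟩
    obtain ⟨s, hs⟩ := h.2
    refine ⟨s, ?_⟩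
    simp only [Set.mem_iInter] at hs ⊢
    exact fun i hi => hs i (hτ hi)

lemma mem_nerve_of {Γ : ι → Set (Finset V)} {τ : Finset ι} {s : Finset V} (h0 : τ.Nonempty)
    (h : ∀ i ∈ τ, s ∈ Γ i) : τ ∈ nerveC Γ := by
  refine ⟨h0, s, ?_⟩
  simp only [Set.mem_iInter]
  exact h

lemma JJ.mono {Γ : ι → Set (Finset V)} {σ σ' τ : Finset ι} {s : Finset V} (h : JJ Γ σ τ s)
    (hσ : σ ⊆ σ') : JJ Γ σ' τ s := by
  obtain ⟨h1, h2, h3⟩ := h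
  refine ⟨h1.trans hσ, h2, ?_⟩
  rcases h3 with h3 | ⟨⟨i, hi, hs⟩, h4⟩
  · exact Or.inl h3
  · exact Or.inr ⟨⟨i, hσ hi, hs⟩, h4⟩

lemma JJ.down {Γ : ι → Set (Finset V)} (hΓ : ∀ i, IsComplex (Γ i)) {σ τ τ' : Finset ι}
    {s s' : Finset V} (h : JJ Γ σ τ s) (hτ : τ' ⊆ τ) (hs : s' ⊆ s) : JJ Γ σ τ' s' := by
  obtain ⟨h1, h2, h3⟩ := h
  refine ⟨hτ.trans h1, ?_, ?_⟩
  · rcases h2 with h2 | h2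
    · subst h2; exact Or.inl (Finset.subset_empty.mp hτ)
    · exact nerve_down h2 hτ
  · rcases s'.eq_empty_or_nonempty with h0 | h0
    · exact Or.inl h0
    · rcases h3 with h3 | ⟨⟨i, hi, h5⟩, h4⟩
      · subst h3; exact Or.inl (Finset.subset_empty.mp hs)
      · exact Or.inr ⟨⟨i, hi, (hΓ i).2 _ h5 _ hs h0⟩,
          fun j hj => (hΓ j).2 _ (h4 j (hτ hj)) _ hs h0⟩

/-- Chains of total size `n` on the complex `JJ`. -/
def CJ (F : Type*) [Field F] (Γ : ι → Set (Finset V)) (σ : Finset ι) (n : ℕ) :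
    Submodule F (Finset ι → Finset V → F) :=
  sup2 F (fun τ s => JJ Γ σ τ s ∧ τ.card + s.card = n)

/-- Chains of vertical size at most `q`. -/
def FV (F : Type*) [Field F] (ι V : Type*) (q : ℕ) : Submodule F (Finset ι → Finset V → F) :=
  sup2 F (fun _ s => s.card ≤ q)

/-- Chains of horizontal size at most `p`. -/
def FH (F : Type*) [Field F] (ι V : Type*) (p : ℕ) : Submodule F (Finset ι → Finset V → F) :=
  sup2 F (fun τ _ => τ.card ≤ p)

lemma CJ_mono {Γ : ι → Set (Finset V)} {σ σ' : Finset ι} (h : σ ⊆ σ') {n : ℕ} :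
    CJ F Γ σ n ≤ CJ F Γ σ' n := fun _ hf τ s h0 => ⟨(hf τ s h0).1.mono h, (hf τ s h0).2⟩

lemma DD_CJ {Γ : ι → Set (Finset V)} (hΓ : ∀ i, IsComplex (Γ i)) {σ : Finset ι} {n : ℕ}
    {f : Finset ι → Finset V → F} (hf : f ∈ CJ F Γ σ (n + 1)) : DD F ι V f ∈ CJ F Γ σ n := by
  intro τ s h
  rcases DD_ne_zero h with ⟨i, hi, h⟩ | ⟨v, hv, h⟩
  · have := hf _ _ h
    simp only [Finset.card_insert_of_notMem hi] at this
    exact ⟨this.1.down hΓ (Finset.subset_insert _ _) subset_rfl, by omega⟩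
  · have := hf _ _ h
    simp only [Finset.card_insert_of_notMem hv] at this
    exact ⟨this.1.down hΓ subset_rfl (Finset.subset_insert _ _), by omega⟩

lemma DD_FV {q : ℕ} {f : Finset ι → Finset V → F} (hf : f ∈ FV F ι V q) :
    DD F ι V f ∈ FV F ι V q := by
  intro τ s h
  rcases DD_ne_zero h with ⟨i, hi, h⟩ | ⟨v, hv, h⟩
  · exact hf _ _ h
  · have := hf _ _ h
    simp only [Finset.card_insert_of_notMem hv] at this
    omega

lemma sup2_zero {P : Finset ι → Finset V → Prop} {f : Finset ι → Finset V → F}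
    (hf : f ∈ sup2 F P) {τ : Finset ι} {s : Finset V} (h : ¬ P τ s) : f τ s = 0 := by
  by_contra h0
  exact h (hf τ s h0)

/-- The vertical part of the differential vanishes if the next level does. -/
lemma DD_eq_h {f : Finset ι → Finset V → F} {τ : Finset ι} {s : Finset V}
    (h : ∀ v ∉ s, f τ (insert v s) = 0) : DD F ι V f τ s = dd F ι (fun τ' => f τ' s) τ := by
  have h2 : dd F V (f τ) s = 0 := by
    by_contra h0
    obtain ⟨v, hv, h'⟩ := dd_ne_zero h0
    exact h' (h v hv)
  rw [DD_apply, h2]; simp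

lemma DD_eq_v {f : Finset ι → Finset V → F} {τ : Finset ι} {s : Finset V}
    (h : ∀ i ∉ τ, f (insert i τ) s = 0) :
    DD F ι V f τ s = (-1) ^ τ.card * dd F V (f τ) s := by
  have h2 : dd F ι (fun τ' => f τ' s) τ = 0 := by
    by_contra h0
    obtain ⟨v, hv, h'⟩ := dd_ne_zero h0
    exact h' (h v hv)
  rw [DD_apply, h2]; simp

/-- Every chain of `JJ` with boundary in the nerve is homologous to a chain of the nerve. -/
lemma push_nerve {Γ : ι → Set (Finset V)} (hΓ : ∀ i, IsComplex (Γ i)) {σ : Finset ι} {n : ℕ}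
    (q : ℕ) : ∀ c ∈ CJ F Γ σ n, c ∈ FV F ι V q → DD F ι V c ∈ FV F ι V 0 →
    ∃ e ∈ CJ F Γ σ (n + 1), c - DD F ι V e ∈ CJ F Γ σ n ∧ c - DD F ι V e ∈ FV F ι V 0 := by
  induction q with
  | zero =>
    intro c hc hq _
    exact ⟨0, Submodule.zero_mem _, by simpa using hc, by simpa using hq⟩
  | succ q ih =>
    intro c hc hq hD
    classical
    let e : Finset ι → Finset V → F := fun τ s =>
      if h : s.card = q + 1 ∧ ∃ i ∈ σ, s ∈ Γ i then cone h.2.choose (fun τ' => c τ' s) τ else 0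
    have he : e ∈ CJ F Γ σ (n + 1) := by
      intro τ s h
      simp only [e] at h
      split_ifs at h with h1
      · have hi := h1.2.choose_spec
        set i := h1.2.choose
        simp only [cone] at h
        split_ifs at h with h2
        · obtain ⟨⟨j1, j2, j3⟩, j4⟩ := hc _ _ (right_ne_zero_of_mul h)
          have hall : ∀ j ∈ τ, s ∈ Γ j := by
            intro j hj
            rcases j3 with j3 | j3
            · rw [j3] at h1; simp at h1
            · by_cases hji : j = i
              · rw [hji]; exact hi.2
              · exact j3.2 j (Finset.mem_erase.mpr ⟨hji, hj⟩)
          refine ⟨⟨?_, Or.inr (mem_nerve_of ⟨i, h2⟩ hall), Or.inr ⟨h1.2, hall⟩⟩, ?_⟩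
          · rw [← Finset.insert_erase h2]
            exact Finset.insert_subset hi.1 j1
          · have := Finset.card_erase_add_one h2
            omega
        · exact absurd rfl h
      · exact absurd rfl h
    have hc' : c - DD F ι V e ∈ CJ F Γ σ n := Submodule.sub_mem _ hc (DD_CJ hΓ he)
    have hbig : ∀ τ s, s.card ≠ q + 1 → e τ s = 0 := by
      intro τ s hs
      simp only [e]
      rw [dif_neg (fun h => hs h.1)]
    have hq' : c - DD F ι V e ∈ FV F ι V q := by
      intro τ s h
      by_contra hlt
      apply h
      have hv : ∀ v ∉ s, e τ (insert v s) = 0 := by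
        intro v hv
        apply hbig
        rw [Finset.card_insert_of_notMem hv]; omega
      have hvc : ∀ τ, ∀ v ∉ s, c τ (insert v s) = 0 := by
        intro τ v hv
        apply sup2_zero hq
        rw [Finset.card_insert_of_notMem hv]; omega
      rw [Pi.sub_apply, Pi.sub_apply, DD_eq_h hv]
      by_cases hs : s.card = q + 1
      · by_cases hex : ∃ i ∈ σ, s ∈ Γ i
        · have h1 : (fun τ' => e τ' s) = cone hex.choose (fun τ' => c τ' s) := by
            ext τ'
            simp only [e]
            rw [dif_pos ⟨hs, hex⟩]
          have h2 : dd F ι (fun τ' => c τ' s) = 0 := by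
            ext τ'
            rw [← DD_eq_h (hvc τ')]
            apply sup2_zero hD
            omega
          have h3 := dd_cone hex.choose (fun τ' => c τ' s) τ
          rw [h2] at h3
          rw [h1, ← h3]
          simp [cone]
        · have h0 : ∀ τ', c τ' s = 0 := by
            intro τ'
            apply sup2_zero hc
            rintro ⟨⟨-, -, h5 | h5⟩, -⟩
            · rw [h5] at hs; simp at hs
            · exact hex h5.1
          have h1 : (fun τ' => e τ' s) = 0 := by
            ext τ'
            simp only [e]
            rw [dif_neg (fun h => hex h.2)]; rfl
          rw [h1, h0]; simp
      · have h1 : (fun τ' => e τ' s) = 0 := by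
          ext τ'
          exact hbig τ' s hs
        have h0 : c τ s = 0 := by
          apply sup2_zero hq
          omega
        rw [h1, h0]; simp
    obtain ⟨e', he', h1, h2⟩ := ih _ hc' hq' (by
      rw [map_sub, DD_DD, sub_zero]; exact hD)
    refine ⟨e + e', Submodule.add_mem _ he he', ?_, ?_⟩
    · rw [map_add, ← sub_sub]; exact h1
    · rw [map_add, ← sub_sub]; exact h2

lemma mem_FV_card {Γ : ι → Set (Finset V)} {σ : Finset ι} {n : ℕ}
    {c : Finset ι → Finset V → F} (hc : c ∈ CJ F Γ σ n) : c ∈ FV F ι V n := by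
  intro τ s h
  have := (hc τ s h).2
  omega

/-- A nerve cycle bounding in `JJ` bounds in the nerve. -/
lemma bounds_nerve {Γ : ι → Set (Finset V)} (hΓ : ∀ i, IsComplex (Γ i)) {σ : Finset ι} {n : ℕ}
    {c : Finset ι → Finset V → F} (hc : c ∈ CJ F Γ σ n) (hD : DD F ι V c ∈ FV F ι V 0) :
    ∃ c' ∈ CJ F Γ σ n, c' ∈ FV F ι V 0 ∧ DD F ι V c' = DD F ι V c := by
  obtain ⟨e, he, h1, h2⟩ := push_nerve hΓ n c hc (mem_FV_card hc) hD
  exact ⟨_, h1, h2, by rw [map_sub, DD_DD, sub_zero]⟩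

/-- `JJ` over a nerve simplex is acyclic. -/
lemma acyclic_simplex {Γ : ι → Set (Finset V)} (hΓ : ∀ i, IsComplex (Γ i)) {σ : Finset ι}
    (hσ : σ ∈ nerveC Γ) {n : ℕ} {c : Finset ι → Finset V → F} (hc : c ∈ CJ F Γ σ n)
    (hD : DD F ι V c = 0) : ∃ a ∈ CJ F Γ σ (n + 1), DD F ι V a = c := by
  obtain ⟨e, he, h1, h2⟩ := push_nerve hΓ n c hc (mem_FV_card hc) (by
    rw [hD]; exact Submodule.zero_mem _)
  set c' := c - DD F ι V e with hc'
  have hD' : DD F ι V c' = 0 := by rw [hc', map_sub, DD_DD, hD, sub_zero]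
  obtain ⟨i, hi⟩ := hσ.1
  let a : Finset ι → Finset V → F := fun τ s => cone i (fun τ' => c' τ' s) τ
  have ha : ∀ τ s, a τ s ≠ 0 → i ∈ τ ∧ c' (τ.erase i) s ≠ 0 := by
    intro τ s h
    simp only [a, cone] at h
    split_ifs at h with h3
    · exact ⟨h3, right_ne_zero_of_mul h⟩
    · exact absurd rfl h
  have haV : a ∈ FV F ι V 0 := fun τ s h => h2 _ _ (ha τ s h).2
  have haJ : a ∈ CJ F Γ σ (n + 1) := by
    intro τ s h
    obtain ⟨hi', h3⟩ := ha τ s h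
    have h4 := h2 _ _ h3
    obtain ⟨h5, h6⟩ := h1 _ _ h3
    have hs : s = ∅ := by simpa using h4
    have hτ : τ ⊆ σ := by
      rw [← Finset.insert_erase hi']
      exact Finset.insert_subset hi h5.1
    refine ⟨⟨hτ, nerve_down hσ hτ, Or.inl hs⟩, ?_⟩
    have := Finset.card_erase_add_one hi'
    omega
  refine ⟨a + e, Submodule.add_mem _ haJ he, ?_⟩
  have key : DD F ι V a = c' := by
    ext τ s
    have hz : ∀ f ∈ FV F ι V 0, ∀ τ, ∀ v ∉ s, f τ (insert v s) = (0 : F) := by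
      intro f hf τ v hv
      apply sup2_zero hf
      rw [Finset.card_insert_of_notMem hv]; omega
    rw [DD_eq_h (hz a haV τ)]
    have h0 : dd F ι (fun τ' => c' τ' s) = 0 := by
      ext τ'
      rw [← DD_eq_h (hz c' h2 τ'), hD']; rfl
    have h3 := dd_cone i (fun τ' => c' τ' s) τ
    rw [h0] at h3
    rw [← h3]
    have h4 : cone i (0 : Finset ι → F) τ = 0 := by simp [cone]
    rw [h4, add_zero]
  rw [map_add, key, hc']
  exact sub_add_cancel c (DD F ι V e)

/-- The key statement: nerve cycles of size `n` are locally and linearly homologous to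
cycles of the union. -/
def PP (F : Type*) [Field F] (Γ : ι → Set (Finset V)) (n : ℕ) (p : ℕ) : Prop :=
  ∃ ψ A : (Finset ι → Finset V → F) →ₗ[F] (Finset ι → Finset V → F),
    ∀ σ : Finset ι, ∀ z ∈ CJ F Γ σ n, z ∈ FV F ι V 0 → DD F ι V z = 0 →
      ψ z ∈ CJ F Γ σ n ∧ ψ z ∈ FH F ι V p ∧ A z ∈ CJ F Γ σ (n + 1) ∧
        z = ψ z + DD F ι V (A z)

lemma zigzag {Γ : ι → Set (Finset V)} (hΓ : ∀ i, IsComplex (Γ i)) (K : ℕ)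
    (hinter : ∀ τ ∈ nerveC Γ, τ.card ≤ K → Ex F (⋂ i ∈ τ, Γ i) (K - τ.card)) (m : ℕ) :
    m ≤ K → PP F Γ K (K - m) := by
  induction m with
  | zero =>
    intro _
    refine ⟨LinearMap.id, 0, fun σ z hz _ _ => ⟨hz, ?_, Submodule.zero_mem _, by simp⟩⟩
    intro τ s h
    have := (hz τ s h).2
    simp only [Nat.sub_zero]; omega
  | succ m ih =>
    intro hm
    obtain ⟨r, A, hrA⟩ := ih (by omega)
    obtain ⟨p, hp⟩ : ∃ p, K - m = p + 1 := ⟨K - m - 1, by omega⟩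
    have hp' : K - (m + 1) = p := by omega
    rw [hp] at hrA
    rw [hp']
    classical
    have hsec : ∀ τ : Finset ι, ∃ g : (Finset V → F) →ₗ[F] (Finset V → F),
        τ ∈ nerveC Γ → τ.card = p + 1 →
        (∀ f, g f ∈ AC F (⋂ i ∈ τ, Γ i) (K - (p + 1) + 1)) ∧
          ∀ f ∈ AC F (⋂ i ∈ τ, Γ i) (K - (p + 1)), dd F V f = 0 → dd F V (g f) = f := by
      intro τ
      by_cases h : τ ∈ nerveC Γ ∧ τ.card = p + 1
      · have h1 := hinter τ h.1 (by omega)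
        rw [h.2] at h1
        obtain ⟨g, hg⟩ := h1.section_exists
        exact ⟨g, fun _ _ => hg⟩
      · exact ⟨0, fun h1 h2 => absurd ⟨h1, h2⟩ h⟩
    choose g hg using hsec
    let G : (Finset ι → Finset V → F) →ₗ[F] (Finset ι → Finset V → F) :=
      LinearMap.pi fun τ => if τ ∈ nerveC Γ ∧ τ.card = p + 1 then
        ((-1 : F) ^ (p + 1)) • (g τ).comp (LinearMap.proj τ) else 0
    have hG1 : ∀ f τ, τ ∈ nerveC Γ → τ.card = p + 1 →
        G f τ = ((-1 : F) ^ (p + 1)) • g τ (f τ) := by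
      intro f τ h1 h2
      simp only [G, LinearMap.pi_apply]
      rw [if_pos ⟨h1, h2⟩]; rfl
    have hG0 : ∀ f τ, ¬ (τ ∈ nerveC Γ ∧ τ.card = p + 1) → G f τ = 0 := by
      intro f τ h
      simp only [G, LinearMap.pi_apply]
      rw [if_neg h]; rfl
    refine ⟨r - (DD F ι V).comp (G.comp r), A + G.comp r, fun σ z hz hz0 hDz => ?_⟩
    obtain ⟨h1, h2, h3, h4⟩ := hrA σ z hz hz0 hDz
    simp only [LinearMap.sub_apply, LinearMap.add_apply, LinearMap.comp_apply]
    have hDf : DD F ι V (r z) = 0 := by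
      have := congrArg (DD F ι V) h4
      rw [map_add, DD_DD, add_zero, hDz] at this
      exact this.symm
    set f := r z with hf
    have hGC : G f ∈ CJ F Γ σ (K + 1) := by
      intro τ s h
      by_cases hτ : τ ∈ nerveC Γ ∧ τ.card = p + 1
      · rw [hG1 f τ hτ.1 hτ.2] at h
        have h5 : g τ (f τ) s ≠ 0 := by
          intro h0; apply h; simp [h0]
        obtain ⟨h6, h7⟩ := (hg τ hτ.1 hτ.2).1 (f τ) s h5
        have hfτ : f τ ≠ 0 := by
          intro h0; rw [h0, map_zero] at h5; exact h5 rfl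
        obtain ⟨s', hs'⟩ := Function.ne_iff.mp hfτ
        have hsub := (h1 τ s' hs').1.1
        refine ⟨⟨hsub, Or.inr hτ.1, ?_⟩, by omega⟩
        rcases h6 with h6 | h6
        · exact Or.inl h6
        · simp only [Set.mem_iInter] at h6
          obtain ⟨i, hi⟩ := hτ.1.1
          exact Or.inr ⟨⟨i, hsub hi, h6 i hi⟩, h6⟩
      · rw [hG0 f τ hτ] at h; exact absurd rfl h
    refine ⟨Submodule.sub_mem _ h1 (DD_CJ hΓ hGC), ?_, Submodule.add_mem _ h3 hGC, ?_⟩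
    · intro τ s h
      by_contra hlt
      apply h
      rw [Pi.sub_apply, Pi.sub_apply, DD_eq_v (f := G f) (by
        intro i hi
        rw [hG0]
        · rfl
        · rw [Finset.card_insert_of_notMem hi]; omega)]
      by_cases hτ : τ ∈ nerveC Γ ∧ τ.card = p + 1
      · rw [hG1 f τ hτ.1 hτ.2, map_smul, hτ.2]
        have hfA : f τ ∈ AC F (⋂ i ∈ τ, Γ i) (K - (p + 1)) := by
          intro s' h'
          obtain ⟨⟨_, _, h7⟩, h8⟩ := h1 τ s' h'
          refine ⟨?_, by omega⟩
          rcases h7 with h7 | h7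
          · exact Or.inl h7
          · right; simp only [Set.mem_iInter]; exact h7.2
        have hdf : dd F V (f τ) = 0 := by
          ext s'
          have h5 := DD_eq_v (f := f) (τ := τ) (s := s') (by
            intro i hi
            apply sup2_zero h2
            rw [Finset.card_insert_of_notMem hi]; omega)
          rw [hDf] at h5
          have h6 : (-1 : F) ^ τ.card ≠ 0 := pow_ne_zero _ (by simp)
          exact (mul_eq_zero.mp h5.symm).resolve_left h6
        rw [(hg τ hτ.1 hτ.2).2 (f τ) hfA hdf, Pi.smul_apply, smul_eq_mul, ← mul_assoc,
          ← mul_pow]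
        simp
      · rw [hG0 f τ hτ]
        have h0 : f τ s = 0 := by
          by_contra h5
          obtain ⟨⟨_, h7, _⟩, _⟩ := h1 τ s h5
          have h8 := h2 τ s h5
          rcases h7 with h7 | h7
          · rw [h7] at hlt; simp at hlt
          · exact hτ ⟨h7, by omega⟩
        rw [h0]; simp
    · rw [map_add]
      conv_lhs => rw [h4]
      abel

lemma PP_succ {Γ : ι → Set (Finset V)} (hΓ : ∀ i, IsComplex (Γ i)) {n : ℕ}
    (hunion : ∀ σ ∈ nerveC Γ, σ.card = n + 1 → Ex F (⋃ i ∈ σ, Γ i) n)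
    (h : PP F Γ n 0) : PP F Γ (n + 1) 0 := by
  classical
  obtain ⟨ψ, A, hP⟩ := h
  let δ : Finset ι → (Finset ι → Finset V → F) := fun σ => Pi.single σ (Pi.single ∅ 1)
  have hδ : ∀ σ τ s, δ σ τ s ≠ 0 → τ = σ ∧ s = ∅ := by
    intro σ τ s h
    by_cases h1 : τ = σ
    · subst h1
      refine ⟨rfl, ?_⟩
      by_contra h2
      apply h
      simp [δ, Pi.single_eq_of_ne h2]
    · exfalso; apply h
      simp [δ, Pi.single_eq_of_ne h1]
  have step : ∀ σ : Finset ι, ∃ U a : Finset ι → Finset V → F,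
      σ ∈ nerveC Γ → σ.card = n + 1 →
      U ∈ CJ F Γ σ (n + 1) ∧ U ∈ FH F ι V 0 ∧ a ∈ CJ F Γ σ (n + 2) ∧
      δ σ = U + A (DD F ι V (δ σ)) + DD F ι V a := by
    intro σ
    by_cases hσ : σ ∈ nerveC Γ ∧ σ.card = n + 1
    swap
    · exact ⟨0, 0, fun h1 h2 => absurd ⟨h1, h2⟩ hσ⟩
    obtain ⟨hσ, hcard⟩ := hσ
    have d1 : δ σ ∈ CJ F Γ σ (n + 1) := by
      intro τ s h
      obtain ⟨rfl, rfl⟩ := hδ _ _ _ h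
      exact ⟨⟨subset_rfl, Or.inr hσ, Or.inl rfl⟩, by simp [hcard]⟩
    have d2 : δ σ ∈ FV F ι V 0 := by
      intro τ s h
      obtain ⟨rfl, rfl⟩ := hδ _ _ _ h
      simp
    obtain ⟨h1, h2, h3, h4⟩ := hP σ (DD F ι V (δ σ)) (DD_CJ hΓ d1) (DD_FV d2) (DD_DD _)
    set z := DD F ι V (δ σ) with hz
    have hDψ : DD F ι V (ψ z) = 0 := by
      have := congrArg (DD F ι V) h4
      rw [map_add, DD_DD (A z), add_zero, hz, DD_DD] at this
      exact this.symm
    have hy : ψ z ∅ ∈ AC F (⋃ i ∈ σ, Γ i) n := by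
      intro s h
      obtain ⟨⟨_, _, h7⟩, h8⟩ := h1 ∅ s h
      refine ⟨?_, by simpa using h8⟩
      rcases h7 with h7 | h7
      · exact Or.inl h7
      · right; simp only [Set.mem_iUnion, exists_prop]; exact h7.1
    have hv : ∀ f ∈ FH F ι V 0, ∀ τ s, DD F ι V f τ s = (-1) ^ τ.card * dd F V (f τ) s := by
      intro f hf τ s
      apply DD_eq_v
      intro i hi
      apply sup2_zero hf
      rw [Finset.card_insert_of_notMem hi]; omega
    have hdy : dd F V (ψ z ∅) = 0 := by
      ext s
      have := hv _ h2 ∅ s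
      rw [hDψ] at this
      simpa using this.symm
    obtain ⟨u, hu, hdu⟩ := hunion σ hσ hcard _ hy hdy
    let U : Finset ι → Finset V → F := Pi.single ∅ u
    have hU0 : ∀ τ, τ ≠ ∅ → U τ = 0 := fun τ hτ => by simp [U, Pi.single_eq_of_ne hτ]
    have hU1 : U ∅ = u := by simp [U]
    have hUH : U ∈ FH F ι V 0 := by
      intro τ s h
      by_cases hτ : τ = ∅
      · simp [hτ]
      · rw [hU0 τ hτ] at h; exact absurd rfl h
    have hUC : U ∈ CJ F Γ σ (n + 1) := by
      intro τ s h
      by_cases hτ : τ = ∅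
      · subst hτ
        rw [hU1] at h
        obtain ⟨h5, h6⟩ := hu s h
        refine ⟨⟨by simp, Or.inl rfl, ?_⟩, by simpa using h6⟩
        rcases h5 with h5 | h5
        · exact Or.inl h5
        · simp only [Set.mem_iUnion, exists_prop] at h5
          exact Or.inr ⟨h5, by simp⟩
      · rw [hU0 τ hτ] at h; exact absurd rfl h
    have hDU : DD F ι V U = ψ z := by
      ext τ s
      rw [hv U hUH]
      by_cases hτ : τ = ∅
      · subst hτ
        rw [hU1, hdu]; simp
      · rw [hU0 τ hτ]
        have : ψ z τ s = 0 := sup2_zero h2 (by simpa using hτ)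
        rw [this]; simp
    obtain ⟨a, ha, hDa⟩ := acyclic_simplex hΓ hσ (n := n + 1) (c := δ σ - U - A z)
      (Submodule.sub_mem _ (Submodule.sub_mem _ d1 hUC) h3) (by
        rw [map_sub, map_sub, hDU, ← hz]
        conv_lhs => enter [1, 1]; rw [h4]
        abel)
    refine ⟨U, a, fun _ _ => ⟨hUC, hUH, ha, ?_⟩⟩
    rw [hDa]; abel
  choose U a hUa using step
  let L : (Finset ι → (Finset ι → Finset V → F)) →
      ((Finset ι → Finset V → F) →ₗ[F] (Finset ι → Finset V → F)) := fun B =>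
    ∑ σ, ((LinearMap.proj ∅ : (Finset V → F) →ₗ[F] F).comp (LinearMap.proj σ)).smulRight (B σ)
  have hL : ∀ B z, L B z = ∑ σ, z σ ∅ • B σ := by
    intro B z
    simp [L, LinearMap.sum_apply]
  refine ⟨L U, L a, fun σ0 z hz hz0 hDz => ?_⟩
  have hterm : ∀ σ, z σ ∅ ≠ 0 → σ ⊆ σ0 ∧ σ ∈ nerveC Γ ∧ σ.card = n + 1 := by
    intro σ h
    obtain ⟨⟨h5, h6, _⟩, h7⟩ := hz σ ∅ h
    simp only [Finset.card_empty, add_zero] at h7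
    refine ⟨h5, ?_, h7⟩
    rcases h6 with h6 | h6
    · rw [h6] at h7; simp at h7
    · exact h6
  have hmem : ∀ (S : Submodule F (Finset ι → Finset V → F)) B,
      (∀ σ, σ ⊆ σ0 → σ ∈ nerveC Γ → σ.card = n + 1 → B σ ∈ S) → L B z ∈ S := by
    intro S B hB
    rw [hL]
    refine Submodule.sum_mem _ fun σ _ => ?_
    by_cases h0 : z σ ∅ = 0
    · rw [h0, zero_smul]; exact Submodule.zero_mem _
    · obtain ⟨h5, h6, h7⟩ := hterm σ h0
      exact Submodule.smul_mem _ _ (hB σ h5 h6 h7)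
  refine ⟨hmem _ _ fun σ h5 h6 h7 => CJ_mono h5 (hUa σ h6 h7).1,
    hmem _ _ fun σ h5 h6 h7 => (hUa σ h6 h7).2.1,
    hmem _ _ fun σ h5 h6 h7 => CJ_mono h5 (hUa σ h6 h7).2.2.1, ?_⟩
  have hzδ : z = ∑ σ, z σ ∅ • δ σ := by
    ext τ s
    rw [Finset.sum_apply, Finset.sum_apply, Finset.sum_eq_single τ]
    · by_cases hs : s = ∅
      · subst hs; simp [δ]
      · have h0 : z τ s = 0 := sup2_zero hz0 (by simpa using hs)
        simp [δ, Pi.single_eq_of_ne hs, h0]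
    · intro σ _ hne
      simp [δ, Pi.single_eq_of_ne (Ne.symm hne)]
    · simp
  have hAz : A (DD F ι V z) = 0 := by rw [hDz, map_zero]
  have h9 : z = L U z + A (DD F ι V z) + DD F ι V (L a z) := by
    conv_rhs => rw [hL, hL]
    conv_rhs => enter [1, 2]; rw [hzδ]
    simp only [map_sum, map_smul]
    rw [← Finset.sum_add_distrib, ← Finset.sum_add_distrib]
    conv_lhs => rw [hzδ]
    refine Finset.sum_congr rfl fun σ _ => ?_
    by_cases h0 : z σ ∅ = 0
    · simp [h0]
    · obtain ⟨_, h6, h7⟩ := hterm σ h0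
      conv_lhs => rw [(hUa σ h6 h7).2.2.2]
      rw [smul_add, smul_add]
  rw [hAz, add_zero] at h9
  exact h9

/-- The key statement holds in the degree of the theorem. -/
lemma PP_main {Γ : ι → Set (Finset V)} (hΓ : ∀ i, IsComplex (Γ i)) (K : ℕ)
    (hinter : ∀ τ ∈ nerveC Γ, τ.card ≤ K → Ex F (⋂ i ∈ τ, Γ i) (K - τ.card)) (m : ℕ)
    (hunion : ∀ σ ∈ nerveC Γ, K + 1 ≤ σ.card → σ.card ≤ K + m →
      Ex F (⋃ i ∈ σ, Γ i) (σ.card - 1)) : PP F Γ (K + m) 0 := by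
  induction m with
  | zero =>
    have := zigzag (F := F) hΓ K hinter K le_rfl
    simpa using this
  | succ m ih =>
    rw [← add_assoc]
    refine PP_succ hΓ ?_ (ih fun σ h1 h2 h3 => hunion σ h1 h2 (by omega))
    intro σ h1 h2
    have := hunion σ h1 (by omega) (by omega)
    rw [h2] at this
    exact this

end Main
universe univ₁

section Translate

variable {F : Type*} [Field F] {W : Type*} [LinearOrder W] [Fintype W]

/-- Chains as functions on all finite sets. -/
def tE (F : Type*) [Field F] (W : Type*) [LinearOrder W] (n : ℕ) :
    Chains F W n →ₗ[F] (Finset W → F) where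
  toFun x s := if h : s.card = n + 1 then x ⟨s, h⟩ else 0
  map_add' x y := by
    ext s
    by_cases h : s.card = n + 1 <;> simp [h]
  map_smul' c x := by
    ext s
    by_cases h : s.card = n + 1 <;> simp [h]

lemma tE_pos {n : ℕ} (x : Chains F W n) {s : Finset W} (h : s.card = n + 1) :
    tE F W n x s = x ⟨s, h⟩ := by
  change (if h : s.card = n + 1 then x ⟨s, h⟩ else 0) = _
  rw [dif_pos h]

lemma tE_neg {n : ℕ} (x : Chains F W n) {s : Finset W} (h : ¬ s.card = n + 1) :
    tE F W n x s = 0 := by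
  change (if h : s.card = n + 1 then x ⟨s, h⟩ else 0) = _
  rw [dif_neg h]

lemma tE_inj {n : ℕ} {x y : Chains F W n} (h : tE F W n x = tE F W n y) : x = y := by
  ext ⟨s, hs⟩
  rw [← tE_pos x hs, ← tE_pos y hs, h]

lemma tE_single {n : ℕ} (t : {s : Finset W // s.card = n + 1}) (a : F) (s : Finset W) :
    tE F W n (Finsupp.single t a) s = if s = t.1 then a else 0 := by
  by_cases h : s.card = n + 1
  · rw [tE_pos _ h, Finsupp.single_apply]
    by_cases hs : s = t.1
    · rw [if_pos hs, if_pos (Subtype.ext hs.symm)]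
    · rw [if_neg hs, if_neg (fun e => hs (congrArg Subtype.val e).symm)]
  · rw [tE_neg _ h, if_neg]
    rintro rfl; exact h t.2

/-- The map back from functions to chains. -/
noncomputable def bE (F : Type*) [Field F] (W : Type*) [LinearOrder W] [Fintype W] (n : ℕ) :
    (Finset W → F) →ₗ[F] Chains F W n :=
  (Finsupp.linearEquivFunOnFinite F F _).symm.toLinearMap.comp
    (LinearMap.funLeft F F (Subtype.val : {s : Finset W // s.card = n + 1} → Finset W))

lemma bE_apply {n : ℕ} (f : Finset W → F) (s : {s : Finset W // s.card = n + 1}) :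
    bE F W n f s = f s.1 := by
  simp [bE, LinearMap.funLeft_apply]

lemma tE_bE {n : ℕ} {S : Set (Finset W)} {f : Finset W → F} (hf : f ∈ AC F S (n + 1)) :
    tE F W n (bE F W n f) = f := by
  ext s
  by_cases h : s.card = n + 1
  · rw [tE_pos _ h, bE_apply]
  · rw [tE_neg _ h]
    by_contra h0
    exact h (hf s (Ne.symm h0)).2

lemma bE_mem {n : ℕ} {S : Set (Finset W)} {f : Finset W → F} (hf : f ∈ AC F S (n + 1)) :
    bE F W n f ∈ chainsIn F F W S n := by
  rw [chainsIn, Finsupp.mem_supported]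
  intro s hs
  simp only [Finset.mem_coe, Finsupp.mem_support_iff, bE_apply] at hs
  obtain ⟨h1, h2⟩ := hf _ hs
  rcases h1 with h1 | h1
  · rw [h1] at h2; simp at h2
  · exact h1

lemma tE_mem {n : ℕ} {S : Set (Finset W)} {x : Chains F W n} (hx : x ∈ chainsIn F F W S n) :
    tE F W n x ∈ AC F S (n + 1) := by
  rw [chainsIn, Finsupp.mem_supported] at hx
  intro s hs
  by_cases h : s.card = n + 1
  · rw [tE_pos _ h] at hs
    exact ⟨Or.inr (hx (Finsupp.mem_support_iff.mpr hs)), h⟩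
  · exact absurd (tE_neg x h) hs

lemma tE_bdry {n : ℕ} (x : Chains F W (n + 1)) :
    tE F W n (bdry F F W n x) = dd F W (tE F W (n + 1) x) := by
  suffices h : (tE F W n).comp (bdry F F W n) = (dd F W).comp (tE F W (n + 1)) from
    LinearMap.congr_fun h x
  refine Finsupp.lhom_ext fun t a => ?_
  ext s
  simp only [LinearMap.comp_apply, bdry, Finsupp.lsum_single, LinearMap.sum_apply, map_sum,
    LinearMap.smul_apply, Finsupp.lsingle_apply, dd_apply, map_zsmul, Finset.sum_apply,
    Pi.smul_apply, tE_single]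
  rw [Finset.sum_attach (t : Finset W) (fun v =>
    ((-1 : ℤ) ^ (((t : Finset W).filter (fun w => w < v)).card)) •
      (if s = (t : Finset W).erase v then a else 0))]
  rw [← Finset.sum_filter_add_sum_filter_not (t : Finset W) (fun v => s = (t : Finset W).erase v)]
  rw [← Finset.sum_filter_add_sum_filter_not sᶜ (fun v => insert v s = (t : Finset W))]
  rw [Finset.sum_eq_zero (s := (t : Finset W).filter (fun v => ¬ s = (t : Finset W).erase v)),
    Finset.sum_eq_zero (s := sᶜ.filter (fun v => ¬ insert v s = (t : Finset W)))]
  · rw [add_zero, add_zero]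
    refine Finset.sum_congr ?_ ?_
    · ext v
      simp only [Finset.mem_filter, Finset.mem_compl]
      constructor
      · rintro ⟨h1, h2⟩
        rw [h2]
        exact ⟨by simp, Finset.insert_erase h1⟩
      · rintro ⟨h1, h2⟩
        rw [← h2]
        exact ⟨by simp, by rw [Finset.erase_insert h1]⟩
    · intro v hv
      simp only [Finset.mem_filter, Finset.mem_compl] at hv
      obtain ⟨h1, h2⟩ := hv
      have h3 : s = (t : Finset W).erase v := by rw [← h2, Finset.erase_insert h1]
      rw [if_pos h2, if_pos h3, zsmul_eq_mul]
      have h4 : ep F v s = ep F v (t : Finset W) := by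
        rw [← h2, ep_insert h1, if_neg (lt_irrefl _)]
      rw [h4, ep]
      push_cast
      rfl
  · intro v hv
    simp only [Finset.mem_filter] at hv
    rw [if_neg hv.2, mul_zero]
  · intro v hv
    simp only [Finset.mem_filter] at hv
    rw [if_neg hv.2, smul_zero]

lemma aug_eq (x : Chains F W 0) : dd F W (tE F W 0 x) ∅ = aug F F W x := by
  suffices h : (LinearMap.proj ∅ : (Finset W → F) →ₗ[F] F).comp ((dd F W).comp (tE F W 0)) =
      aug F F W from LinearMap.congr_fun h x
  refine Finsupp.lhom_ext fun t a => ?_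
  obtain ⟨v, hv⟩ := Finset.card_eq_one.mp t.2
  simp only [LinearMap.comp_apply, LinearMap.proj_apply, dd_apply, tE_single, aug,
    Finsupp.lsum_single, LinearMap.id_apply]
  rw [Finset.sum_eq_single v]
  · simp [hv, ep]
  · intro w _ hw
    rw [if_neg, mul_zero]
    rw [hv]
    simpa using hw
  · simp

lemma mem_cycles_iff {n : ℕ} (x : Chains F W n) :
    x ∈ cycles F F W n ↔ dd F W (tE F W n x) = 0 := by
  cases n with
  | zero =>
    rw [cycles, LinearMap.mem_ker, ← aug_eq]
    constructor
    · intro h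
      ext s
      by_cases hs : s = ∅
      · rw [hs, h]; rfl
      · by_contra h0
        obtain ⟨v, hv, h1⟩ := dd_ne_zero h0
        apply h1
        apply tE_neg
        rw [Finset.card_insert_of_notMem hv]
        simpa using hs
    · intro h; rw [h]; rfl
  | succ n =>
    rw [cycles, LinearMap.mem_ker, ← tE_bdry]
    constructor
    · intro h; rw [h, map_zero]
    · intro h; exact tE_inj (by rw [h, map_zero])

/-- Vanishing of reduced homology in degree `m - 1` is exactness. -/
lemma Ex_of_vanish {S : Set (Finset W)} (hS : IsComplex S) {q : ℤ} {m : ℕ} (hq : q = m - 1)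
    (h : RedHVanish F F W S q) : Ex F S m := by
  intro f hf hd
  rw [RedHVanish, if_neg (by omega)] at h
  cases m with
  | zero =>
    rw [if_pos (by simpa using hq)] at h
    obtain ⟨s, hs⟩ := h
    obtain ⟨v, hv⟩ := hS.1 s hs
    have hvS : ({v} : Finset W) ∈ S := hS.2 s hs _ (by simpa using hv) (by simp)
    refine ⟨cone v f, ?_, ?_⟩
    · intro t ht
      simp only [cone] at ht
      split_ifs at ht with h1
      · have h2 := (hf _ (right_ne_zero_of_mul ht)).2
        have h3 := Finset.card_erase_add_one h1
        have h4 : t.card = 1 := by omega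
        have h5 : t = {v} := by
          obtain ⟨w, rfl⟩ := Finset.card_eq_one.mp h4
          simp only [Finset.mem_singleton] at h1
          rw [h1]
        exact ⟨Or.inr (h5 ▸ hvS), by omega⟩
      · exact absurd rfl ht
    · ext t
      have := dd_cone v f t
      rw [hd] at this
      have h4 : cone v (0 : Finset W → F) t = 0 := by simp [cone]
      rw [h4, add_zero] at this
      exact this
  | succ n =>
    rw [if_neg (by omega)] at h
    have hqn : q.toNat = n := by omega
    rw [hqn] at h
    have hZ : bE F W n f ∈ cyclesIn F F W S n :=
      ⟨(mem_cycles_iff _).mpr (by rw [tE_bE hf, hd]), bE_mem hf⟩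
    have h0 := (Submodule.Quotient.mk_eq_zero _).mp
      (Subsingleton.elim (Submodule.Quotient.mk (p := Submodule.comap
        (cyclesIn F F W S n).subtype (boundariesIn F F W S n)) ⟨bE F W n f, hZ⟩) 0)
    obtain ⟨c, hc, hcf⟩ := h0
    refine ⟨tE F W (n + 1) c, tE_mem hc, ?_⟩
    rw [← tE_bdry, hcf]
    exact tE_bE hf

lemma rank_aux {K : Type*} [Field K] {M M' : Type univ₁} [AddCommGroup M] [Module K M]
    [AddCommGroup M'] [Module K M'] (P : Submodule K M) (T : M →ₗ[K] M')
    (h : LinearMap.ker T ≤ P) : Module.rank K (M ⧸ P) ≤ Module.rank K M' := by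
  have h1 : Module.rank K (M ⧸ P) ≤ Module.rank K (M ⧸ LinearMap.ker T) :=
    LinearMap.rank_le_of_surjective (Submodule.factor h) (Submodule.factor_surjective h)
  refine h1.trans ?_
  rw [T.quotKerEquivRange.rank_eq]
  exact Submodule.rank_le _

lemma isComplex_iInter {ι V : Type*} {Γ : ι → Set (Finset V)} (hΓ : ∀ i, IsComplex (Γ i))
    {σ : Finset ι} (hσ : σ.Nonempty) : IsComplex (⋂ i ∈ σ, Γ i) := by
  constructor
  · intro s hs
    obtain ⟨i, hi⟩ := hσ
    simp only [Set.mem_iInter] at hs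
    exact (hΓ i).1 s (hs i hi)
  · intro s hs t ht h0
    simp only [Set.mem_iInter] at hs ⊢
    exact fun i hi => (hΓ i).2 s (hs i hi) t ht h0

lemma isComplex_iUnion {ι V : Type*} {Γ : ι → Set (Finset V)} (hΓ : ∀ i, IsComplex (Γ i))
    (σ : Finset ι) : IsComplex (⋃ i ∈ σ, Γ i) := by
  constructor
  · intro s hs
    simp only [Set.mem_iUnion, exists_prop] at hs
    obtain ⟨i, _, hi⟩ := hs
    exact (hΓ i).1 s hi
  · intro s hs t ht h0
    simp only [Set.mem_iUnion, exists_prop] at hs ⊢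
    obtain ⟨i, hi, h1⟩ := hs
    exact ⟨i, hi, (hΓ i).2 s h1 t ht h0⟩

end Translate

section Final

variable {F : Type*} [Field F] {ι : Type*} [LinearOrder ι] [Fintype ι]
  {V : Type*} [LinearOrder V] [Fintype V]

/-- Nerve chains inside the double complex. -/
def eN (F : Type*) [Field F] (ι V : Type*) [DecidableEq V] :
    (Finset ι → F) →ₗ[F] (Finset ι → Finset V → F) where
  toFun f τ s := if s = ∅ then f τ else 0
  map_add' f g := by
    ext τ s
    by_cases h : s = ∅ <;> simp [h]
  map_smul' c f := by
    ext τ s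
    by_cases h : s = ∅ <;> simp [h]

lemma eN_apply (f : Finset ι → F) (τ : Finset ι) (s : Finset V) :
    eN F ι V f τ s = if s = ∅ then f τ else 0 := rfl

lemma eN_FV (f : Finset ι → F) : eN F ι V f ∈ FV F ι V 0 := by
  intro τ s h
  rw [eN_apply] at h
  split_ifs at h with h1
  · simp [h1]
  · exact absurd rfl h

lemma eN_CJ {Γ : ι → Set (Finset V)} {f : Finset ι → F} {n : ℕ}
    (hf : f ∈ AC F (nerveC Γ) n) : eN F ι V f ∈ CJ F Γ Finset.univ n := by
  intro τ s h
  rw [eN_apply] at h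
  split_ifs at h with h1
  · obtain ⟨h2, h3⟩ := hf τ h
    exact ⟨⟨Finset.subset_univ _, h2, Or.inl h1⟩, by simp [h1, h3]⟩
  · exact absurd rfl h

lemma DD_FV0 {f : Finset ι → Finset V → F} (hf : f ∈ FV F ι V 0) (τ : Finset ι) (s : Finset V) :
    DD F ι V f τ s = dd F ι (fun τ' => f τ' s) τ := by
  apply DD_eq_h
  intro v hv
  apply sup2_zero hf
  rw [Finset.card_insert_of_notMem hv]; omega

lemma DD_FH0 {f : Finset ι → Finset V → F} (hf : f ∈ FH F ι V 0) (τ : Finset ι) (s : Finset V) :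
    DD F ι V f τ s = (-1) ^ τ.card * dd F V (f τ) s := by
  apply DD_eq_v
  intro v hv
  apply sup2_zero hf
  rw [Finset.card_insert_of_notMem hv]; omega

lemma DD_eN {f : Finset ι → F} (hf : dd F ι f = 0) : DD F ι V (eN F ι V f) = 0 := by
  ext τ s
  rw [DD_FV0 (eN_FV f)]
  by_cases h : s = ∅
  · have : (fun τ' => eN F ι V f τ' s) = f := by
      ext τ'; rw [eN_apply, if_pos h]
    rw [this, hf]; rfl
  · have : (fun τ' => eN F ι V f τ' s) = 0 := by
      ext τ'; rw [eN_apply, if_neg h]; rfl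
    rw [this, map_zero]; rfl

/-- The rank inequality in nonnegative degrees. -/
lemma rank_main {F : Type univ₁} [Field F] {V : Type univ₁} [LinearOrder V] [Fintype V]
    {ι : Type} [LinearOrder ι] [Fintype ι] {X : Set (Finset V)}
    {Γ : ι → Set (Finset V)} (hΓ : ∀ i, IsComplex (Γ i)) (hcover : (⋃ i, Γ i) = X) {n : ℕ}
    (hP : PP F Γ (n + 1) 0) :
    Module.rank F (redH F F ι (nerveC Γ) n) ≤ Module.rank F (redH F F V X n) := by
  obtain ⟨ψ, A, hψ⟩ := hP
  have hX : ∀ s, s ∈ X ↔ ∃ i ∈ (Finset.univ : Finset ι), s ∈ Γ i := by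
    intro s; rw [← hcover]; simp
  let ZN := cyclesIn F F ι (nerveC Γ) n
  have hx : ∀ x : ZN, _ := fun x => hψ Finset.univ (eN F ι V (tE F ι n x.1))
    (eN_CJ (tE_mem x.2.2)) (eN_FV _) (DD_eN ((mem_cycles_iff _).mp x.2.1))
  let T0 : ZN →ₗ[F] (Finset V → F) :=
    (LinearMap.proj ∅).comp (ψ.comp ((eN F ι V).comp ((tE F ι n).comp ZN.subtype)))
  have hT0 : ∀ x : ZN, T0 x = ψ (eN F ι V (tE F ι n x.1)) ∅ := fun x => rfl
  have hAC : ∀ x : ZN, T0 x ∈ AC F X (n + 1) := by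
    intro x s h
    rw [hT0] at h
    obtain ⟨⟨_, _, h7⟩, h8⟩ := (hx x).1 ∅ s h
    refine ⟨?_, by simpa using h8⟩
    rcases h7 with h7 | h7
    · exact Or.inl h7
    · right; rw [hX]; exact h7.1
  have hcyc : ∀ x : ZN, dd F V (T0 x) = 0 := by
    intro x
    obtain ⟨_, h2, _, h4⟩ := hx x
    have h5 := congrArg (DD F ι V) h4
    rw [map_add, DD_DD (A _), add_zero, DD_eN ((mem_cycles_iff _).mp x.2.1)] at h5
    ext s
    have h6 := DD_FH0 h2 ∅ s
    rw [← h5] at h6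
    rw [hT0]
    simpa using h6.symm
  let T1 : ZN →ₗ[F] cyclesIn F F V X n :=
    LinearMap.codRestrict _ ((bE F V n).comp T0) (fun x =>
      ⟨(mem_cycles_iff _).mpr (by
        rw [LinearMap.comp_apply, tE_bE (hAC x), hcyc]), bE_mem (hAC x)⟩)
  have hT1 : ∀ x : ZN, tE F V n (T1 x).1 = T0 x := fun x => tE_bE (hAC x)
  refine rank_aux _ ((Submodule.mkQ _).comp T1) ?_
  intro x hxk
  rw [LinearMap.mem_ker, LinearMap.comp_apply, Submodule.mkQ_apply,
    Submodule.Quotient.mk_eq_zero] at hxk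
  obtain ⟨c, hc, hcx⟩ := hxk
  obtain ⟨h1, h2, h3, h4⟩ := hx x
  set z := eN F ι V (tE F ι n x.1) with hz
  have hdc : dd F V (tE F V (n + 1) c) = ψ z ∅ := by
    rw [← tE_bdry, hcx]; exact hT1 x
  let C : Finset ι → Finset V → F := Pi.single ∅ (tE F V (n + 1) c)
  have hC0 : ∀ τ, τ ≠ ∅ → C τ = 0 := fun τ hτ => by simp [C, Pi.single_eq_of_ne hτ]
  have hC1 : C ∅ = tE F V (n + 1) c := by simp [C]
  have hCH : C ∈ FH F ι V 0 := by
    intro τ s h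
    by_cases hτ : τ = ∅
    · simp [hτ]
    · rw [hC0 τ hτ] at h; exact absurd rfl h
  have hCC : C ∈ CJ F Γ Finset.univ (n + 2) := by
    intro τ s h
    by_cases hτ : τ = ∅
    · subst hτ
      rw [hC1] at h
      obtain ⟨h5, h6⟩ := tE_mem hc s h
      refine ⟨⟨by simp, Or.inl rfl, ?_⟩, by simpa using h6⟩
      rcases h5 with h5 | h5
      · exact Or.inl h5
      · exact Or.inr ⟨(hX s).mp h5, by simp⟩
    · rw [hC0 τ hτ] at h; exact absurd rfl h
  have hDC : DD F ι V C = ψ z := by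
    ext τ s
    rw [DD_FH0 hCH]
    by_cases hτ : τ = ∅
    · subst hτ
      rw [hC1, hdc]; simp
    · rw [hC0 τ hτ]
      have : ψ z τ s = 0 := sup2_zero h2 (by simpa using hτ)
      rw [this]; simp
  have hDz : DD F ι V (C + A z) = z := by
    rw [map_add, hDC]; exact h4.symm
  obtain ⟨c', hc', hc'0, hDc'⟩ := bounds_nerve hΓ (Submodule.add_mem _ hCC h3) (by
    rw [hDz]; exact eN_FV _)
  rw [hDz] at hDc'
  have hg : (fun τ => c' τ ∅) ∈ AC F (nerveC Γ) (n + 1 + 1) := by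
    intro τ h
    obtain ⟨⟨_, h6, _⟩, h7⟩ := hc' τ ∅ h
    exact ⟨h6, by simpa using h7⟩
  refine ⟨bE F ι (n + 1) (fun τ => c' τ ∅), bE_mem hg, ?_⟩
  apply tE_inj
  rw [tE_bdry, tE_bE hg]
  ext τ
  rw [← DD_FV0 hc'0, hDc', hz, eN_apply, if_pos rfl]
  rfl

end Final

end MixedNerve

universe u

/-- The mixed nerve theorem: interpolating between intersection and union conditions. -/
theorem mixed_nerve_theorem {V : Type u} [LinearOrder V] [Fintype V]
    (F : Type u) [Field F] {N : ℕ}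
    (X : Set (Finset V)) (hX : IsComplex X)
    (Γ : Fin N → Set (Finset V))
    (hΓ : ∀ i, IsComplex (Γ i) ∧ Γ i ⊆ X)
    (hcover : (⋃ i, Γ i) = X)
    (k ℓ : ℤ) (hk : -1 ≤ k) (hkℓ : k ≤ ℓ) (hℓ : ℓ < N)
    (hinter : ∀ σ ∈ nerveC Γ, (σ.card : ℤ) - 1 ≤ k →
      RedHVanish F F V (⋂ i ∈ σ, Γ i) (k - σ.card))
    (hunion : ∀ σ ∈ nerveC Γ, k + 1 ≤ (σ.card : ℤ) - 1 → (σ.card : ℤ) - 1 ≤ ℓ →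
      RedHVanish F F V (⋃ i ∈ σ, Γ i) ((σ.card : ℤ) - 2)) :
    redHRank F F (Fin N) (nerveC Γ) ℓ ≤ redHRank F F V X ℓ := by
  have hΓc : ∀ i, IsComplex (Γ i) := fun i => (hΓ i).1
  rcases lt_or_eq_of_le (hk.trans hkℓ) with hlt | heq
  · obtain ⟨K, hK⟩ : ∃ K : ℕ, k = K - 1 := ⟨(k + 1).toNat, by omega⟩
    obtain ⟨n, hn⟩ : ∃ n : ℕ, ℓ = n := ⟨ℓ.toNat, by omega⟩
    subst hn
    have hP : MixedNerve.PP F Γ (K + (n + 1 - K)) 0 := by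
      refine MixedNerve.PP_main hΓc K ?_ _ ?_
      · intro τ hτ hc
        exact MixedNerve.Ex_of_vanish (MixedNerve.isComplex_iInter hΓc hτ.1)
          (q := k - τ.card) (by omega) (hinter τ hτ (by omega))
      · intro σ hσ h1 h2
        exact MixedNerve.Ex_of_vanish (MixedNerve.isComplex_iUnion hΓc σ)
          (q := (σ.card : ℤ) - 2) (by omega) (hunion σ hσ (by omega) (by omega))
    rw [show K + (n + 1 - K) = n + 1 by omega] at hP
    rw [redHRank, redHRank, if_neg (by omega), if_neg (by omega), if_neg (by omega),
      if_neg (by omega)]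
    exact MixedNerve.rank_main hΓc hcover hP
  · subst heq
    simp only [redHRank, lt_irrefl, if_false, if_true]
    by_cases hXe : X.Nonempty
    · obtain ⟨s, hs⟩ := hXe
      rw [← hcover, Set.mem_iUnion] at hs
      obtain ⟨i, hi⟩ := hs
      have : (nerveC Γ).Nonempty :=
        ⟨{i}, MixedNerve.mem_nerve_of (s := s) (by simp) (by simpa using hi)⟩
      rw [if_pos this]
      exact zero_le
    · rw [if_neg hXe]
      split_ifs <;> simp
end

section
/- Let X be a simplicial complex embedded in ℝ^d and Γ a finite collection of subcomplexes of X. If H̃_{|Γ'|-2}(⋃Γ', F) = 0 for every nonempty subcollection Γ' ⊆ Γ with |Γ'| ≤ d+1, then ⋂Γ ≠ ∅. -/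
open Finset

variable (R : Type*) [CommRing R] (A : Type*) [AddCommGroup A] [Module R A]
variable (V : Type*) [LinearOrder V]

section HellyAlgebra

/-- total augmented chains -/
abbrev Tot (F V : Type*) [Field F] : Type _ := Finset V →₀ F

/-- sign of a vertex in a finset -/
def sgnF (F : Type*) [Field F] {V : Type*} [LinearOrder V] (v : V) (s : Finset V) : F :=
  (-1) ^ ((s.filter (fun w => w < v)).card)

lemma sgnF_mul_self (F : Type*) [Field F] {V : Type*} [LinearOrder V] (v : V) (s : Finset V) :
    sgnF F v s * sgnF F v s = 1 := by
  unfold sgnF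
  rw [← mul_pow]; simp

lemma sgnF_erase_self (F : Type*) [Field F] {V : Type*} [LinearOrder V] (v : V) (s : Finset V) :
    sgnF F v (s.erase v) = sgnF F v s := by
  unfold sgnF
  congr 2
  ext w
  simp only [Finset.mem_filter, Finset.mem_erase]
  constructor
  · rintro ⟨⟨_, h⟩, h'⟩; exact ⟨h, h'⟩
  · rintro ⟨h, h'⟩; exact ⟨⟨h'.ne, h⟩, h'⟩

lemma sgnF_insert_of_lt (F : Type*) [Field F] {V : Type*} [LinearOrder V] {v i : V}
    {s : Finset V} (hi : i ∉ s) (h : i < v) :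
    sgnF F v (insert i s) = - sgnF F v s := by
  unfold sgnF
  rw [Finset.filter_insert, if_pos h, Finset.card_insert_of_notMem (by simp [hi]), pow_succ]
  simp

lemma sgnF_insert_of_not_lt (F : Type*) [Field F] {V : Type*} [LinearOrder V] {v i : V}
    {s : Finset V} (h : ¬ i < v) :
    sgnF F v (insert i s) = sgnF F v s := by
  unfold sgnF
  rw [Finset.filter_insert, if_neg h]

/-- total boundary -/
noncomputable def totD (F V : Type*) [Field F] [LinearOrder V] : Module.End F (Tot F V) :=
  Finsupp.linearCombination F (fun s => ∑ v ∈ s, Finsupp.single (s.erase v) (sgnF F v s))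

lemma totD_single {F V : Type*} [Field F] [LinearOrder V] (s : Finset V) (a : F) :
    totD F V (Finsupp.single s a) = a • ∑ v ∈ s, Finsupp.single (s.erase v) (sgnF F v s) := by
  simp [totD, Finsupp.linearCombination_single]

/-- cone operator -/
noncomputable def totH (F : Type*) {V : Type*} [Field F] [LinearOrder V] (i : V) :
    Module.End F (Tot F V) :=
  Finsupp.linearCombination F
    (fun s => if i ∈ s then 0 else Finsupp.single (insert i s) (sgnF F i s))

lemma totH_single {F V : Type*} [Field F] [LinearOrder V] (i : V) (s : Finset V) (a : F) :
    totH F i (Finsupp.single s a) =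
      a • if i ∈ s then 0 else Finsupp.single (insert i s) (sgnF F i s) := by
  simp [totH, Finsupp.linearCombination_single]

lemma sgn_swap (F : Type*) [Field F] {V : Type*} [LinearOrder V] {v i : V}
    {s : Finset V} (hi : i ∉ s) (hv : v ∈ s) :
    sgnF F i s * sgnF F v (insert i s) = - (sgnF F v s * sgnF F i (s.erase v)) := by
  have hne : v ≠ i := fun h => hi (h ▸ hv)
  have e : insert v (s.erase v) = s := Finset.insert_erase hv
  rcases lt_or_gt_of_ne hne with h | h
  · rw [sgnF_insert_of_not_lt F (not_lt.2 h.le)]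
    have := sgnF_insert_of_lt F (s := s.erase v) (Finset.notMem_erase v s) h
    rw [e] at this
    rw [this]; ring
  · rw [sgnF_insert_of_lt F hi h]
    have := sgnF_insert_of_not_lt F (s := s.erase v) (not_lt.2 h.le)
    rw [e] at this
    rw [this]; ring

lemma totDH {F V : Type*} [Field F] [LinearOrder V] (i : V) (z : Tot F V) :
    totD F V (totH F i z) + totH F i (totD F V z) = z := by
  suffices h : totD F V ∘ₗ totH F i + totH F i ∘ₗ totD F V = LinearMap.id by
    exact LinearMap.congr_fun h z
  refine Finsupp.lhom_ext' fun s => LinearMap.ext_ring ?_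
  simp only [LinearMap.comp_apply, LinearMap.add_apply, Finsupp.lsingle_apply, LinearMap.id_apply]
  rw [totH_single, totD_single, one_smul, one_smul, map_sum]
  simp only [totH_single]
  by_cases hi : i ∈ s
  · rw [if_pos hi, map_zero, zero_add, Finset.sum_eq_single i]
    · rw [if_neg (Finset.notMem_erase i s), Finset.insert_erase hi, Finsupp.smul_single,
        sgnF_erase_self, smul_eq_mul, sgnF_mul_self]
    · intro v hv hne
      rw [if_pos (Finset.mem_erase.2 ⟨hne.symm, hi⟩), smul_zero]
    · intro h; exact absurd hi h
  · rw [if_neg hi, totD_single, Finset.sum_insert hi, Finset.erase_insert hi, smul_add,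
      Finsupp.smul_single, smul_eq_mul, add_assoc]
    have : sgnF F i (insert i s) = sgnF F i s := sgnF_insert_of_not_lt F (lt_irrefl i)
    rw [this, sgnF_mul_self]
    rw [Finset.smul_sum, ← Finset.sum_add_distrib]
    rw [Finset.sum_eq_zero, add_zero]
    intro v hv
    have hne : v ≠ i := fun h => hi (h ▸ hv)
    rw [if_neg (fun h => hi (Finset.mem_of_mem_erase h)), Finsupp.smul_single, Finsupp.smul_single,
      Finset.erase_insert_of_ne hne.symm, smul_eq_mul, smul_eq_mul, sgn_swap F hi hv,
      ← Finsupp.single_add]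
    simp

lemma totDD {F V : Type*} [Field F] [LinearOrder V] (z : Tot F V) :
    totD F V (totD F V z) = 0 := by
  suffices h : totD F V ∘ₗ totD F V = 0 by
    exact LinearMap.congr_fun h z
  refine Finsupp.lhom_ext' fun s => LinearMap.ext_ring ?_
  simp only [LinearMap.comp_apply, Finsupp.lsingle_apply, LinearMap.zero_apply]
  induction s using Finset.induction_on with
  | empty => simp [totD_single]
  | insert i s hi ih =>
    have h1 : Finsupp.single (insert i s) (1 : F) =
        totH F i (Finsupp.single s (sgnF F i s)) := by
      rw [totH_single, if_neg hi, Finsupp.smul_single, smul_eq_mul, sgnF_mul_self]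
    have h2 : Finsupp.single s (sgnF F i s) = sgnF F i s • Finsupp.single s (1 : F) := by
      rw [Finsupp.smul_single, smul_eq_mul, mul_one]
    have h3 : ∀ y : Tot F V, totD F V (totD F V (totH F i y)) = totH F i (totD F V (totD F V y)) := by
      intro y
      have a := congrArg (totD F V) (totDH i y)
      have b := totDH i (totD F V y)
      rw [map_add] at a
      have := a.trans b.symm
      rw [add_comm] at this
      exact add_left_cancel this
    rw [h1, h3, h2, map_smul, map_smul, ih]
    simp

/-- chains supported on faces in `S` of cardinality `n` -/
def supC (F : Type*) {V : Type*} [Field F] (S : Set (Finset V)) (n : ℕ) : Submodule F (Tot F V) :=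
  Finsupp.supported F F {s | s ∈ S ∧ s.card = n}

/-- exactness -/
def Ex (F : Type*) {V : Type*} [Field F] [LinearOrder V] (S : Set (Finset V)) (n : ℕ) : Prop :=
  ∀ z ∈ supC F S n, totD F V z = 0 → ∃ w ∈ supC F S (n + 1), totD F V w = z

open scoped Classical in
/-- map carried by `Φ` -/
noncomputable def carr (F : Type*) {A B : Type*} [Field F] [LinearOrder A] [LinearOrder B]
    (Φ : Finset A → Set (Finset B)) (s : Finset A) : Tot F B :=
  if s = ∅ then Finsupp.single ∅ 1 else
  if h : ∃ w ∈ supC F (Φ s) s.card, totD F B w =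
      ∑ v ∈ s.attach, sgnF F v.1 s • carr F Φ (s.erase v.1) then h.choose else 0
termination_by s.card
decreasing_by exact Finset.card_erase_lt_of_mem v.2

lemma carr_spec (F : Type*) {A B : Type*} [Field F] [LinearOrder A] [LinearOrder B]
    (Φ : Finset A → Set (Finset B)) (hmono : ∀ s t, s ⊆ t → Φ s ⊆ Φ t)
    (h0 : ∅ ∈ Φ ∅)
    (hex : ∀ s, s.Nonempty → Ex F (Φ s) (s.card - 1)) :
    ∀ n, ∀ s : Finset A, s.card = n → carr F Φ s ∈ supC F (Φ s) s.card ∧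
      totD F B (carr F Φ s) =
        Finsupp.linearCombination F (carr F Φ) (totD F A (Finsupp.single s 1)) := by
  intro n
  induction n using Nat.strong_induction_on with
  | _ n ih =>
  intro s hs
  by_cases hse : s = ∅
  · subst hse
    have : carr F Φ ∅ = Finsupp.single ∅ 1 := by rw [carr]; simp
    rw [this]
    constructor
    · exact Finsupp.single_mem_supported F 1 ⟨h0, rfl⟩
    · simp [totD_single]
  · have hne : s.Nonempty := Finset.nonempty_iff_ne_empty.2 hse
    have hpos : 0 < s.card := hne.card_pos
    have hsum : Finsupp.linearCombination F (carr F Φ) (totD F A (Finsupp.single s 1)) =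
        ∑ v ∈ s, sgnF F v s • carr F Φ (s.erase v) := by
      rw [totD_single, one_smul, map_sum]
      simp [Finsupp.linearCombination_single]
    have hsum' : ∑ v ∈ s.attach, sgnF F v.1 s • carr F Φ (s.erase v.1) =
      ∑ v ∈ s, sgnF F v s • carr F Φ (s.erase v) :=
      Finset.sum_attach s (fun v => sgnF F v s • carr F Φ (s.erase v))
    have hcyc : totD F B (∑ v ∈ s, sgnF F v s • carr F Φ (s.erase v)) = 0 := by
      have : totD F B (∑ v ∈ s, sgnF F v s • carr F Φ (s.erase v)) =
          Finsupp.linearCombination F (carr F Φ) (totD F A (totD F A (Finsupp.single s 1))) := by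
        rw [totD_single s, one_smul, map_sum, map_sum, map_sum]
        refine Finset.sum_congr rfl fun v hv => ?_
        rw [map_smul, (ih _ (hs ▸ Finset.card_erase_lt_of_mem hv) (s.erase v) rfl).2,
          ← map_smul, ← map_smul, Finsupp.smul_single, smul_eq_mul, mul_one]
      rw [this, totDD, map_zero]
    have hin : (∑ v ∈ s, sgnF F v s • carr F Φ (s.erase v)) ∈ supC F (Φ s) (s.card - 1) := by
      refine Submodule.sum_mem _ fun v hv => Submodule.smul_mem _ _ ?_
      have := (ih _ (hs ▸ Finset.card_erase_lt_of_mem hv) (s.erase v) rfl).1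
      rw [Finset.card_erase_of_mem hv] at this
      refine Finsupp.supported_mono ?_ this
      rintro t ⟨ht, ht'⟩
      exact ⟨hmono _ _ (Finset.erase_subset v s) ht, ht'⟩
    have hw : ∃ w ∈ supC F (Φ s) s.card, totD F B w =
      ∑ v ∈ s.attach, sgnF F v.1 s • carr F Φ (s.erase v.1) := by
      obtain ⟨w, hw, hw'⟩ := hex s hne _ hin hcyc
      rw [Nat.sub_add_cancel hpos] at hw
      exact ⟨w, hw, by rw [hw', hsum']⟩
    have hc : carr F Φ s = hw.choose := by
      rw [carr, if_neg hse, dif_pos hw]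
    rw [hc, hsum, ← hsum']
    exact hw.choose_spec

lemma carr_empty (F : Type*) {A B : Type*} [Field F] [LinearOrder A] [LinearOrder B]
    (Φ : Finset A → Set (Finset B)) : carr F Φ ∅ = Finsupp.single ∅ 1 := by
  rw [carr]; simp

lemma ex_simplex (F : Type*) {V : Type*} [Field F] [LinearOrder V] (T : Finset V)
    (hT : T.Nonempty) (n : ℕ) : Ex F {t | t ⊆ T} n := by
  obtain ⟨i, hi⟩ := hT
  intro z hz hDz
  refine ⟨totH F i z, ?_, ?_⟩
  · unfold totH
    rw [Finsupp.linearCombination_apply]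
    refine Submodule.sum_mem _ fun t ht => Submodule.smul_mem _ _ ?_
    have := hz ht
    split_ifs with h
    · exact Submodule.zero_mem _
    · refine Finsupp.single_mem_supported F _ ⟨?_, ?_⟩
      · exact Finset.insert_subset hi this.1
      · rw [Finset.card_insert_of_notMem h, this.2]
  · have := totDH i z
    rwa [hDz, map_zero, add_zero] at this

/-- degree sign -/
noncomputable def totE (F V : Type*) [Field F] : Module.End F (Tot F V) :=
  Finsupp.linearCombination F (fun s => Finsupp.single s ((-1) ^ s.card))

lemma totE_single {F V : Type*} [Field F] (s : Finset V) (a : F) :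
    totE F V (Finsupp.single s a) = Finsupp.single s (a * (-1) ^ s.card) := by
  simp [totE, Finsupp.linearCombination_single]

lemma totED {F V : Type*} [Field F] [LinearOrder V] :
    totE F V * totD F V = - (totD F V * totE F V) := by
  refine Finsupp.lhom_ext' fun s => LinearMap.ext_ring ?_
  simp only [LinearMap.comp_apply, Finsupp.lsingle_apply, LinearMap.neg_apply,
    Module.End.mul_apply]
  rw [totD_single, totE_single, totD_single, one_smul, map_sum, Finset.smul_sum,
    ← Finset.sum_neg_distrib]
  refine Finset.sum_congr rfl fun v hv => ?_
  rw [totE_single, Finsupp.smul_single, ← Finsupp.single_neg]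
  congr 1
  have : s.card = (s.erase v).card + 1 := (Finset.card_erase_add_one hv).symm
  rw [this, pow_succ, smul_eq_mul]; ring

lemma trace_zero_aux {F M : Type*} [Field F] [AddCommGroup M] [Module F M]
    (D H E ψ : Module.End F M) (hid : D * H + H * D = 1) (hED : E * D = - (D * E))
    (hψ : ψ * D = D * ψ) : LinearMap.trace F M (E * ψ) = 0 := by
  have : E * ψ = E * ψ * (D * H + H * D) := by
    rw [hid, mul_one]
  rw [this, mul_add, map_add]
  have e1 : E * ψ * (D * H) = - (D * (E * ψ * H)) := by
    calc _ = E * (ψ * D) * H := by simp only [mul_assoc]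
      _ = (E * D) * ψ * H := by rw [hψ]; simp only [mul_assoc]
      _ = _ := by rw [hED]; simp only [mul_assoc, neg_mul]
  rw [e1, map_neg, LinearMap.trace_mul_comm, mul_assoc (E * ψ)]
  simp

lemma trace_zero {F V : Type*} [Field F] [LinearOrder V] (i : V)
    (ψ : Module.End F (Tot F V)) (hψ : ψ * totD F V = totD F V * ψ) :
    LinearMap.trace F _ (totE F V * ψ) = 0 :=
  trace_zero_aux (totD F V) (totH F i) (totE F V) ψ (LinearMap.ext fun z => totDH i z) totED hψ

lemma trace_diag {F V : Type*} [Field F] [Fintype V]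
    (ψ : Module.End F (Tot F V)) (h0 : ψ (Finsupp.single ∅ 1) = Finsupp.single ∅ 1)
    (h : ∀ s : Finset V, s.Nonempty → ψ (Finsupp.single s 1) s = 0) :
    LinearMap.trace F _ (totE F V * ψ) = 1 := by
  classical
  rw [LinearMap.trace_eq_matrix_trace F (Finsupp.basisSingleOne (R := F) (ι := Finset V)),
    Matrix.trace]
  have key : ∀ (z : Tot F V) s, totE F V z s = (-1) ^ s.card * z s := by
    intro z s
    induction z using Finsupp.induction_linear with
    | zero => simp
    | add f g hf hg => rw [map_add, Finsupp.add_apply, hf, hg, Finsupp.add_apply, mul_add]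
    | single t a =>
      rw [totE_single, Finsupp.single_apply, Finsupp.single_apply]
      split_ifs with h
      · rw [h]; ring
      · simp
  rw [Finset.sum_eq_single ∅]
  · simp [Matrix.diag, LinearMap.toMatrix_apply, key, h0]
  · intro s _ hs
    simp [Matrix.diag, LinearMap.toMatrix_apply, key, h s (Finset.nonempty_iff_ne_empty.2 hs)]
  · simp

theorem helly_alg {F V ι : Type*} [Field F] [LinearOrder V] [LinearOrder ι] [Fintype ι]
    [Nonempty ι] (Γ : ι → Set (Finset V)) (hΓ : ∀ i, IsComplex (Γ i))
    (hex : ∀ σ : Finset ι, σ.Nonempty → Ex F (insert ∅ (⋃ i ∈ σ, Γ i)) (σ.card - 1)) :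
    (⋂ i, Γ i).Nonempty := by
  by_contra hcon
  have hc : ∀ v : V, ∃ i, {v} ∉ Γ i := by
    intro v
    by_contra h
    push Not at h
    exact hcon ⟨{v}, Set.mem_iInter.2 h⟩
  choose c hc using hc
  let Φ : Finset ι → Set (Finset V) := fun σ => insert ∅ (⋃ i ∈ σ, Γ i)
  let Ψ : Finset V → Set (Finset ι) := fun s => {t | t ⊆ s.image c}
  have hΦ := carr_spec F Φ (fun s t hst => Set.insert_subset_insert
    (Set.biUnion_subset_biUnion_left hst)) (Set.mem_insert _ _) hex
  have hΨ := carr_spec F Ψ (fun s t hst u (hu : u ⊆ _) => hu.trans (Finset.image_subset_image hst))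
    (by simp [Ψ]) (fun s hs => ex_simplex F _ (hs.image c) _)
  let f := Finsupp.linearCombination F (carr F Φ)
  let g := Finsupp.linearCombination F (carr F Ψ)
  have hf : totD F V ∘ₗ f = f ∘ₗ totD F ι := by
    refine Finsupp.lhom_ext' fun s => LinearMap.ext_ring ?_
    simp only [LinearMap.comp_apply, Finsupp.lsingle_apply, f]
    rw [Finsupp.linearCombination_single, one_smul, (hΦ _ s rfl).2]
  have hg : totD F ι ∘ₗ g = g ∘ₗ totD F V := by
    refine Finsupp.lhom_ext' fun s => LinearMap.ext_ring ?_
    simp only [LinearMap.comp_apply, Finsupp.lsingle_apply, g]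
    rw [Finsupp.linearCombination_single, one_smul, (hΨ _ s rfl).2]
  have hψ : (g ∘ₗ f) * totD F ι = totD F ι * (g ∘ₗ f) := by
    ext1 z
    have h1 := fun z => LinearMap.congr_fun hf z
    have h2 := fun z => LinearMap.congr_fun hg z
    simp only [LinearMap.comp_apply] at h1 h2
    refine LinearMap.ext_ring ?_
    simp only [Module.End.mul_apply, LinearMap.comp_apply, h1, h2]
  have t0 := trace_zero (Classical.arbitrary ι) _ hψ
  rw [trace_diag] at t0
  · exact one_ne_zero t0
  · simp [f, g, Finsupp.linearCombination_single, carr_empty]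
  · intro σ hσ
    have h1 : f (Finsupp.single σ 1) = carr F Φ σ := by
      simp [f, Finsupp.linearCombination_single]
    rw [LinearMap.comp_apply, h1]
    have hs := (hΦ _ σ rfl).1
    suffices g (carr F Φ σ) ∈ Finsupp.supported F F {τ | τ ≠ σ} by
      by_contra h
      exact this (Finsupp.mem_support_iff.2 h) rfl
    simp only [g]
    rw [Finsupp.linearCombination_apply]
    refine Submodule.sum_mem _ fun s hs' => Submodule.smul_mem _ _ ?_
    obtain ⟨hs1, hs2⟩ := hs hs'
    refine Finsupp.supported_mono ?_ (hΨ _ s rfl).1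
    rintro τ ⟨hτ, hτ'⟩ rfl
    rcases hs1 with rfl | hs1
    · simp at hs2
      exact hσ.ne_empty (Finset.card_eq_zero.1 hs2.symm)
    · simp only [Set.mem_iUnion] at hs1
      obtain ⟨i, hi, hsi⟩ := hs1
      obtain ⟨v, hv, hvi⟩ := Finset.mem_image.1 (hτ hi)
      subst hvi
      exact hc v ((hΓ _).2 s hsi {v} (by simpa using hv) (Finset.singleton_nonempty v))

end HellyAlgebra

section HellyGeometry

open Filter Topology

lemma bary_exists {E : Type*} [NormedAddCommGroup E] [NormedSpace ℝ E] [FiniteDimensional ℝ E]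
    (s : Finset E) (hs : AffineIndependent ℝ ((↑) : s → E))
    (hcard : s.card = Module.finrank ℝ E + 1) :
    ∃ c : E → (E →ᵃ[ℝ] ℝ), (∀ v ∈ s, ∀ w ∈ s, v ≠ w → c v w = 0) ∧
      (∀ x, x ∈ convexHull ℝ (s : Set E) ↔ ∀ v ∈ s, 0 ≤ c v x) ∧
      (∀ x, ∑ v ∈ s, c v x = 1) ∧ (∀ x, ∑ v ∈ s, c v x • v = x) := by
  classical
  have htop : affineSpan ℝ (Set.range ((↑) : s → E)) = ⊤ := by
    rw [hs.affineSpan_eq_top_iff_card_eq_finrank_add_one]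
    simpa using hcard
  let b : AffineBasis s ℝ E := ⟨(↑), hs, htop⟩
  have hb : ∀ i, b i = (i : E) := fun i => rfl
  refine ⟨fun v => if h : v ∈ s then b.coord ⟨v, h⟩ else 0, ?_, ?_, ?_, ?_⟩
  · intro v hv w hw hne
    have : w = b ⟨w, hw⟩ := rfl
    simp only [dif_pos hv]
    rw [this, b.coord_apply_ne]
    intro h
    exact hne (congrArg Subtype.val h)
  · intro x
    have h1 := b.convexHull_eq_nonneg_coord
    have h2 : Set.range b = (s : Set E) := by
      ext y; simp [hb]
    rw [h2] at h1
    rw [h1]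
    constructor
    · intro h v hv
      simp only [dif_pos hv]
      exact h _
    · intro h i
      have := h i.1 i.2
      simpa only [dif_pos i.2] using this
  · intro x
    rw [← Finset.sum_attach]
    have := b.sum_coord_apply_eq_one x
    rw [← this]
    refine Finset.sum_congr rfl fun i _ => ?_
    simp only [dif_pos i.2]
  · intro x
    rw [← Finset.sum_attach]
    have := b.linear_combination_coord_eq_self x
    conv_rhs => rw [← this]
    refine Finset.sum_congr rfl fun i _ => ?_
    simp only [dif_pos i.2, hb]

lemma move_in {E : Type*} [NormedAddCommGroup E] [NormedSpace ℝ E]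
    (s : Finset E) (c : E → (E →ᵃ[ℝ] ℝ)) (y u : E)
    (h : ∀ v ∈ s, 0 < c v y ∨ (0 ≤ c v y ∧ 0 ≤ (c v).linear u)) :
    ∀ᶠ ε : ℝ in 𝓝[>] 0, ∀ v ∈ s, 0 ≤ c v (y + ε • u) := by
  rw [Filter.eventually_all_finset]
  intro v hv
  have e : ∀ ε : ℝ, c v (y + ε • u) = c v y + ε * (c v).linear u := by
    intro ε
    have := (c v).map_vadd y (ε • u)
    rw [vadd_eq_add, vadd_eq_add, map_smul, smul_eq_mul, add_comm, add_comm (ε * _)] at this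
    exact this
  simp only [e]
  rcases h v hv with h | ⟨h, h'⟩
  · have : Tendsto (fun ε : ℝ => c v y + ε * (c v).linear u) (𝓝 0)
        (𝓝 (c v y + 0 * (c v).linear u)) :=
      Continuous.tendsto (by fun_prop) 0
    rw [zero_mul, add_zero] at this
    exact nhdsWithin_le_nhds ((this.eventually (lt_mem_nhds h)).mono fun _ h => le_of_lt h)
  · filter_upwards [self_mem_nhdsWithin] with ε hε
    have : 0 < ε := hε
    positivity

lemma free_facet {E : Type*} [NormedAddCommGroup E] [NormedSpace ℝ E] [FiniteDimensional ℝ E]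
    [DecidableEq E] (X : Geometry.SimplicialComplex ℝ E) (S : Finset (Finset E))
    (hne : S.Nonempty) (hX : ∀ s ∈ S, s ∈ X.faces)
    (hcard : ∀ s ∈ S, s.card = Module.finrank ℝ E + 1) :
    ∃ s ∈ S, ∃ v ∈ s, ∀ s' ∈ S, s.erase v ⊆ s' → s' = s := by
  obtain ⟨s0, hs0⟩ := hne
  rcases Nat.eq_zero_or_pos (Module.finrank ℝ E) with hd | hd
  · have : Subsingleton E := Module.finrank_zero_iff.1 hd
    have hc0 := hcard s0 hs0
    obtain ⟨v, hv⟩ : s0.Nonempty := Finset.card_pos.1 (by omega)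
    refine ⟨s0, hs0, v, hv, fun s' hs' _ => ?_⟩
    have hc' := hcard s' hs'
    obtain ⟨v', hv'⟩ : s'.Nonempty := Finset.card_pos.1 (by omega)
    ext x
    rw [Subsingleton.elim x v]
    refine ⟨fun _ => hv, fun _ => ?_⟩
    rwa [Subsingleton.elim v v']
  have hb : ∀ s : Finset E, ∃ c : E → (E →ᵃ[ℝ] ℝ), s ∈ S →
      (∀ v ∈ s, ∀ w ∈ s, v ≠ w → c v w = 0) ∧
      (∀ x, x ∈ convexHull ℝ (s : Set E) ↔ ∀ v ∈ s, 0 ≤ c v x) ∧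
      (∀ x, ∑ v ∈ s, c v x = 1) ∧ (∀ x, ∑ v ∈ s, c v x • v = x) := by
    intro s
    by_cases hs : s ∈ S
    · obtain ⟨c, hc⟩ := bary_exists s (X.indep (hX s hs)) (hcard s hs)
      exact ⟨c, fun _ => hc⟩
    · exact ⟨fun _ => 0, fun h => absurd h hs⟩
  choose c hc using hb
  have hlin : ∀ (s : Finset E) (v y u : E) (ε : ℝ),
      c s v (y + ε • u) = c s v y + ε * (c s v).linear u := by
    intro s v y u ε
    have := (c s v).map_vadd y (ε • u)
    rw [vadd_eq_add, vadd_eq_add, map_smul, smul_eq_mul, add_comm, add_comm (ε * _)] at this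
    exact this
  -- an interior point of `s0`
  obtain ⟨x0, hx0⟩ : ∃ x0 : E, ∀ v ∈ s0, 0 < c s0 v x0 := by
    have hcp : (0 : ℝ) < s0.card := by rw [hcard s0 hs0]; positivity
    refine ⟨s0.centroid ℝ id, fun v hv => ?_⟩
    have hw : ∑ i ∈ s0, s0.centroidWeights ℝ i = 1 :=
      s0.sum_centroidWeights_eq_one_of_card_ne_zero ℝ (by rw [hcard s0 hs0]; omega)
    rw [Finset.centroid_def, Finset.map_affineCombination _ _ _ hw,
      Finset.affineCombination_eq_linear_combination _ _ _ hw]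
    have hsum : ∑ w ∈ s0, c s0 v w = c s0 v v := by
      refine Finset.sum_eq_single v (fun w hw hne => ?_) (fun h => absurd hv h)
      exact (hc s0 hs0).1 v hv w hw hne.symm
    have hone : c s0 v v = 1 := by
      have := (hc s0 hs0).2.2.1 v
      rw [Finset.sum_eq_single v] at this
      · exact this
      · intro w hw hne
        exact (hc s0 hs0).1 w hw v hv hne
      · intro h; exact absurd hv h
    simp only [Finset.centroidWeights_apply, Function.comp_apply, id, smul_eq_mul]
    rw [← Finset.mul_sum, hsum, hone]
    positivity
  -- a generic direction
  let W : Finset E → E → E → Submodule ℝ E := fun s v w =>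
    Submodule.span ℝ ((((s.erase v).erase w).image (fun x => x - x0) : Finset E) : Set E)
  have hW : ∀ s ∈ S, ∀ v ∈ s, ∀ w ∈ s, v ≠ w → W s v w ≠ ⊤ := by
    intro s hs v hv w hw hne htop
    have h1 := finrank_span_finset_le_card (R := ℝ) (((s.erase v).erase w).image (fun x => x - x0))
    have h2 : (((s.erase v).erase w).image (fun x => x - x0)).card ≤ ((s.erase v).erase w).card :=
      Finset.card_image_le
    rw [Finset.card_erase_of_mem (Finset.mem_erase.2 ⟨hne.symm, hw⟩),
      Finset.card_erase_of_mem hv, hcard s hs] at h2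
    have h3 : Set.finrank ℝ ((((s.erase v).erase w).image (fun x => x - x0) : Finset E) : Set E)
        = Module.finrank ℝ E := by
      change Module.finrank ℝ (W s v w) = _
      rw [htop, finrank_top]
    omega
  obtain ⟨u, hu⟩ : ∃ u : E, ∀ s ∈ S, ∀ v ∈ s, ∀ w ∈ s, v ≠ w → u ∉ W s v w := by
    let Fam : Finset (Submodule ℝ E) := S.biUnion fun s => ((s ×ˢ s).filter
      (fun p => p.1 ≠ p.2)).image (fun p => W s p.1 p.2)
    have hmem : ∀ s ∈ S, ∀ v ∈ s, ∀ w ∈ s, v ≠ w → W s v w ∈ Fam := by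
      intro s hs v hv w hw hne
      refine Finset.mem_biUnion.2 ⟨s, hs, Finset.mem_image.2 ⟨(v, w), ?_, rfl⟩⟩
      simp [hv, hw, hne]
    have htop : ⊤ ∉ Fam := by
      intro h
      obtain ⟨s, hs, h⟩ := Finset.mem_biUnion.1 h
      obtain ⟨⟨v, w⟩, hp, h⟩ := Finset.mem_image.1 h
      simp only [Finset.mem_filter, Finset.mem_product] at hp
      exact hW s hs v hp.1.1 w hp.1.2 hp.2 h
    have := Subspace.biUnion_ne_univ_of_top_notMem htop
    obtain ⟨u, hu⟩ := (Set.ne_univ_iff_exists_notMem _).1 this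
    refine ⟨u, fun s hs v hv w hw hne h => hu ?_⟩
    exact Set.mem_biUnion (hmem s hs v hv w hw hne) h
  have hu0 : u ≠ 0 := by
    have : 1 < s0.card := by rw [hcard s0 hs0]; omega
    obtain ⟨v, hv, w, hw, hne⟩ := Finset.one_lt_card.1 this
    rintro rfl
    exact hu s0 hs0 v hv w hw hne (Submodule.zero_mem _)
  -- the last point of the ray
  let U : Set E := ⋃ s ∈ S, convexHull ℝ (s : Set E)
  have hU : IsCompact U := S.isCompact_biUnion fun s _ => s.finite_toSet.isCompact_convexHull (𝕜 := ℝ)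
  have hK : IsCompact ((fun t : ℝ => x0 + t • u) ⁻¹' U) := by
    have he : Topology.IsClosedEmbedding (fun t : ℝ => x0 + t • u) :=
      (Homeomorph.addLeft x0).isClosedEmbedding.comp (isClosedEmbedding_smul_left (𝕜 := ℝ) hu0)
    exact he.isCompact_preimage hU
  have hmemU : ∀ s ∈ S, ∀ y, (∀ v ∈ s, 0 ≤ c s v y) → y ∈ U := by
    intro s hs y hy
    exact Set.mem_biUnion hs (((hc s hs).2.1 y).2 hy)
  obtain ⟨ε0, hε0, hε0'⟩ : ∃ ε : ℝ, (∀ v ∈ s0, 0 ≤ c s0 v (x0 + ε • u)) ∧ 0 < ε :=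
    ((move_in s0 (c s0) x0 u fun v hv => Or.inl (hx0 v hv)).and self_mem_nhdsWithin).exists
  obtain ⟨T, hTU, hT⟩ := hK.exists_isGreatest ⟨ε0, hmemU s0 hs0 _ hε0⟩
  have hTpos : 0 < T := lt_of_lt_of_le hε0' (hT (hmemU s0 hs0 _ hε0))
  set y := x0 + T • u with hy
  have hA : ∀ s ∈ S, ∀ v ∈ s, ∀ w ∈ s, v ≠ w → c s v y = 0 → c s w y = 0 → False := by
    intro s hs v hv w hw hne h1 h2
    apply hu s hs v hv w hw hne
    have e1 : ∑ x ∈ s, c s x y • (x - x0) = T • u := by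
      simp only [smul_sub]
      rw [Finset.sum_sub_distrib, (hc s hs).2.2.2 y, ← Finset.sum_smul, (hc s hs).2.2.1 y, hy]
      simp
    have e2 : T • u ∈ W s v w := by
      rw [← e1]
      refine Submodule.sum_mem _ fun x hx => ?_
      by_cases hxv : x = v
      · rw [hxv, h1, zero_smul]; exact Submodule.zero_mem _
      by_cases hxw : x = w
      · rw [hxw, h2, zero_smul]; exact Submodule.zero_mem _
      refine Submodule.smul_mem _ _ (Submodule.subset_span ?_)
      exact Finset.mem_coe.2 (Finset.mem_image_of_mem _ (by simp [hx, hxv, hxw]))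
    exact ((W s v w).smul_mem_iff hTpos.ne').1 e2
  have hB : ∀ s ∈ S, y ∈ convexHull ℝ (s : Set E) →
      ∃ v ∈ s, c s v y = 0 ∧ (c s v).linear u < 0 := by
    intro s hs hys
    by_contra hcon
    push Not at hcon
    have hys' := ((hc s hs).2.1 y).1 hys
    obtain ⟨ε, hε, hε'⟩ : ∃ ε : ℝ, (∀ v ∈ s, 0 ≤ c s v (y + ε • u)) ∧ 0 < ε := by
      refine ((move_in s (c s) y u fun v hv => ?_).and self_mem_nhdsWithin).exists
      rcases (hys' v hv).lt_or_eq with h | h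
      · exact Or.inl h
      · exact Or.inr ⟨hys' v hv, hcon v hv h.symm⟩
    have h1 : x0 + (T + ε) • u ∈ U := by
      rw [add_smul, ← add_assoc]
      exact hmemU s hs _ hε
    have h2 : T + ε ≤ T := hT h1
    linarith
  have hC : ∀ s ∈ S, y ∈ convexHull ℝ (s : Set E) →
      ∀ᶠ ε : ℝ in 𝓝[>] 0, y + ε • (-u) ∈ convexHull ℝ (s : Set E) := by
    intro s hs hys
    obtain ⟨v, hv, hv0, hvu⟩ := hB s hs hys
    have hys' := ((hc s hs).2.1 y).1 hys
    have := move_in s (c s) y (-u) fun w hw => by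
      by_cases hwv : w = v
      · right
        refine ⟨hys' w hw, ?_⟩
        rw [hwv, map_neg]; linarith
      · left
        refine lt_of_le_of_ne (hys' w hw) fun h => ?_
        exact hA s hs w hw v hv hwv h.symm hv0
    exact this.mono fun ε h => ((hc s hs).2.1 _).2 h
  obtain ⟨s, hs, hys⟩ : ∃ s ∈ S, y ∈ convexHull ℝ (s : Set E) := by
    have : y ∈ U := hTU
    simpa [U] using this
  obtain ⟨v, hv, hv0, hvu⟩ := hB s hs hys
  refine ⟨s, hs, v, hv, fun s' hs' hsub => ?_⟩
  by_contra hss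
  have hvs' : v ∉ s' := by
    intro h
    apply hss
    refine (Finset.eq_of_subset_of_card_le (fun x hx => ?_) ?_).symm
    · by_cases hxv : x = v
      · rwa [hxv]
      · exact hsub (Finset.mem_erase.2 ⟨hxv, hx⟩)
    · rw [hcard s hs, hcard s' hs']
  have hys' : y ∈ convexHull ℝ (s' : Set E) := by
    have e1 : ∑ x ∈ s.erase v, c s x y • x = y := by
      have := (Finset.add_sum_erase s (fun x => c s x y • x) hv).trans ((hc s hs).2.2.2 y)
      simpa [hv0] using this
    have e2 : ∑ x ∈ s.erase v, c s x y = 1 := by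
      have := (Finset.add_sum_erase s (fun x => c s x y) hv).trans ((hc s hs).2.2.1 y)
      simpa [hv0] using this
    rw [← e1]
    refine (convex_convexHull ℝ _).sum_mem (fun x hx => ?_) e2 (fun x hx => ?_)
    · exact ((hc s hs).2.1 y).1 hys x (Finset.mem_of_mem_erase hx)
    · exact subset_convexHull ℝ _ (hsub hx)
  obtain ⟨ε, ⟨h1, h2⟩, hε⟩ := (((hC s hs hys).and (hC s' hs' hys')).and self_mem_nhdsWithin).exists
  have hεpos : 0 < ε := hε
  have h3 := X.inter_subset_convexHull (hX s hs) (hX s' hs') ⟨h1, h2⟩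
  have h4 : c s v (y + ε • (-u)) = 0 := by
    have hconv : Convex ℝ ((c s v) ⁻¹' {0}) := (convex_singleton 0).affine_preimage (c s v)
    refine convexHull_min ?_ hconv h3
    rintro x ⟨hx, hx'⟩
    exact (hc s hs).1 v hv x hx (fun h => hvs' (h ▸ hx'))
  rw [hlin, hv0, map_neg] at h4
  have : ε * (c s v).linear u < 0 := mul_neg_of_pos_of_neg hεpos hvu
  linarith

lemma ex_top {E : Type*} [NormedAddCommGroup E] [NormedSpace ℝ E] [FiniteDimensional ℝ E]
    (F : Type*) [Field F] [LinearOrder E] (X : Geometry.SimplicialComplex ℝ E)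
    (S : Set (Finset E)) (hS : S ⊆ X.faces) (n : ℕ) (hn : Module.finrank ℝ E + 1 ≤ n) :
    Ex F (insert ∅ S) n := by
  intro z hz hDz
  suffices hz0 : z = 0 by
    exact ⟨0, Submodule.zero_mem _, by rw [hz0, map_zero]⟩
  by_contra hz0
  have hne : z.support.Nonempty := Finsupp.support_nonempty_iff.2 hz0
  have hcd : ∀ s ∈ z.support, s.card = n := fun s hs => (hz hs).2
  have hX : ∀ s ∈ z.support, s ∈ X.faces := by
    intro s hs
    rcases (hz hs).1 with h | h
    · have := hcd s hs
      rw [h] at this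
      simp at this
      omega
    · exact hS h
  have hcard : ∀ s ∈ z.support, s.card = Module.finrank ℝ E + 1 := by
    intro s hs
    have h1 := (X.indep (hX s hs)).card_le_finrank_succ
    have h2 : Module.finrank ℝ (vectorSpan ℝ (Set.range ((↑) : s → E))) ≤ Module.finrank ℝ E :=
      Submodule.finrank_le _
    rw [Fintype.card_coe] at h1
    have := hcd s hs
    omega
  obtain ⟨s, hs, v, hv, hfree⟩ := free_facet X z.support hne hX hcard
  have hval : totD F E z (s.erase v) = z s * sgnF F v s := by
    unfold totD
    rw [Finsupp.linearCombination_apply, Finsupp.sum, Finsupp.finsetSum_apply,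
      Finset.sum_eq_single s]
    · rw [Finsupp.smul_apply, smul_eq_mul, Finsupp.finsetSum_apply, Finset.sum_eq_single v]
      · rw [Finsupp.single_eq_same]
      · intro w hw hne
        refine Finsupp.single_eq_of_ne fun h => hne ?_
        exact Finset.erase_injOn s hw hv h.symm
      · intro h; exact absurd hv h
    · intro s' hs' hne
      rw [Finsupp.smul_apply, Finsupp.finsetSum_apply, Finset.sum_eq_zero, smul_zero]
      intro w hw
      refine Finsupp.single_eq_of_ne fun h => hne (hfree s' hs' ?_)
      rw [h]
      exact Finset.erase_subset _ _
    · intro h; exact absurd hs h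
  rw [hDz] at hval
  have h1 : z s ≠ 0 := Finsupp.mem_support_iff.1 hs
  have h2 : sgnF F v s ≠ 0 := left_ne_zero_of_mul_eq_one (sgnF_mul_self F v s)
  exact mul_ne_zero h1 h2 hval.symm

end HellyGeometry

section HellyBridge

/-- embedding of graded chains in total chains -/
noncomputable def embC (F V : Type*) [Field F] [LinearOrder V] (n : ℕ) :
    Chains F V n →ₗ[F] Tot F V :=
  Finsupp.lmapDomain F F Subtype.val

lemma embC_single {F V : Type*} [Field F] [LinearOrder V] (n : ℕ)
    (s : {s : Finset V // s.card = n + 1}) (a : F) :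
    embC F V n (Finsupp.single s a) = Finsupp.single s.1 a := by
  simp [embC]

lemma embC_injective {F V : Type*} [Field F] [LinearOrder V] (n : ℕ) :
    Function.Injective (embC F V n) :=
  Finsupp.mapDomain_injective Subtype.val_injective

lemma embC_apply {F V : Type*} [Field F] [LinearOrder V] (n : ℕ) (z : Chains F V n)
    (s : {s : Finset V // s.card = n + 1}) : embC F V n z s.1 = z s :=
  Finsupp.mapDomain_apply Subtype.val_injective z s

lemma totD_embC {F V : Type*} [Field F] [LinearOrder V] (n : ℕ) (z : Chains F V (n + 1)) :
    totD F V (embC F V (n + 1) z) = embC F V n (bdry F F V n z) := by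
  suffices h : totD F V ∘ₗ embC F V (n + 1) = embC F V n ∘ₗ bdry F F V n from
    LinearMap.congr_fun h z
  refine Finsupp.lhom_ext' fun s => LinearMap.ext_ring ?_
  simp only [LinearMap.comp_apply, Finsupp.lsingle_apply]
  rw [embC_single, totD_single, one_smul, bdry, Finsupp.lsum_single, LinearMap.sum_apply, map_sum,
    ← Finset.sum_attach]
  refine Finset.sum_congr rfl fun v _ => ?_
  rw [LinearMap.smul_apply, map_zsmul, Finsupp.lsingle_apply, embC_single, Finsupp.smul_single]
  congr 1
  unfold sgnF
  simp

lemma totD_embC_zero {F V : Type*} [Field F] [LinearOrder V] (z : Chains F V 0) :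
    totD F V (embC F V 0 z) = Finsupp.single ∅ (aug F F V z) := by
  suffices h : totD F V ∘ₗ embC F V 0 = Finsupp.lsingle ∅ ∘ₗ aug F F V from
    LinearMap.congr_fun h z
  refine Finsupp.lhom_ext' fun s => LinearMap.ext_ring ?_
  simp only [LinearMap.comp_apply, Finsupp.lsingle_apply]
  rw [embC_single, totD_single, one_smul, aug, Finsupp.lsum_single, LinearMap.id_apply]
  obtain ⟨v, hv⟩ := Finset.card_eq_one.1 s.2
  rw [hv, Finset.sum_singleton]
  have h1 : ({v} : Finset V).erase v = ∅ := by simp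
  rw [h1]
  congr 1
  unfold sgnF
  simp [Finset.filter_singleton]

lemma ex_of_vanish (F : Type*) {V : Type*} [Field F] [LinearOrder V] (S : Set (Finset V))
    (hS : ∀ s ∈ S, s.Nonempty) (n : ℕ)
    (hv : RedHVanish F F V S (((n + 1 : ℕ) : ℤ) - 2)) (hdown : IsComplex S) :
    Ex F (insert ∅ S) n := by
  intro z hz hDz
  cases n with
  | zero =>
    have hne : S.Nonempty := by
      simpa [RedHVanish] using hv
    obtain ⟨s, hs⟩ := hne
    obtain ⟨v, hvs⟩ := hS s hs
    have hvS : {v} ∈ S := hdown.2 s hs {v} (by simpa using hvs) (Finset.singleton_nonempty v)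
    refine ⟨Finsupp.single {v} (z ∅), Finsupp.single_mem_supported F _ ⟨Or.inr hvS, rfl⟩, ?_⟩
    rw [totD_single, Finset.sum_singleton]
    have h1 : ({v} : Finset V).erase v = ∅ := by simp
    have h2 : sgnF F v {v} = 1 := by simp [sgnF, Finset.filter_singleton]
    rw [h1, h2, Finsupp.smul_single, smul_eq_mul, mul_one]
    ext t
    by_cases ht : t = ∅
    · rw [ht, Finsupp.single_eq_same]
    · rw [Finsupp.single_eq_of_ne ht]
      by_contra h
      exact ht (Finset.card_eq_zero.1 (hz (Finsupp.mem_support_iff.2 (Ne.symm h))).2)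
  | succ k =>
    have hsub : Subsingleton (redH F F V S k) := by
      have e : (((k + 1 + 1 : ℕ) : ℤ) - 2) = (k : ℤ) := by push_cast; ring
      rw [e, RedHVanish, if_neg (by omega), if_neg (by omega), Int.toNat_natCast] at hv
      exact hv
    have hzS : ∀ t ∈ z.support, t ∈ S ∧ t.card = k + 1 := by
      intro t ht
      obtain ⟨h1, h2⟩ := hz ht
      refine ⟨?_, h2⟩
      rcases h1 with h | h
      · rw [h] at h2; simp at h2
      · exact h
    let c : Chains F V k := z.comapDomain Subtype.val Subtype.val_injective.injOn
    have hcz : embC F V k c = z := by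
      refine Finsupp.mapDomain_comapDomain _ Subtype.val_injective z ?_
      intro t ht
      exact ⟨⟨t, (hzS t ht).2⟩, rfl⟩
    have hcyc : c ∈ cycles F F V k := by
      cases k with
      | zero =>
        change aug F F V c = 0
        have := totD_embC_zero c
        rw [hcz, hDz] at this
        exact (Finsupp.single_eq_zero.1 this.symm)
      | succ m =>
        change bdry F F V m c = 0
        have := totD_embC m c
        rw [hcz, hDz] at this
        exact embC_injective m (by rw [← this, map_zero])
    have hcS : c ∈ chainsIn F F V S k := by
      intro t ht
      have : z t.1 ≠ 0 := by
        have := Finsupp.mem_support_iff.1 ht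
        exact this
      exact (hzS t.1 (Finsupp.mem_support_iff.2 this)).1
    have hb : c ∈ boundariesIn F F V S k := by
      have h0 := Subsingleton.elim
        (Submodule.Quotient.mk (p := Submodule.comap (cyclesIn F F V S k).subtype
          (boundariesIn F F V S k)) ⟨c, hcyc, hcS⟩) 0
      rw [Submodule.Quotient.mk_eq_zero] at h0
      exact h0
    obtain ⟨w, hw, hwc⟩ := hb
    refine ⟨embC F V (k + 1) w, ?_, ?_⟩
    · intro t ht
      obtain ⟨a, ha, rfl⟩ := Finset.mem_image.1 (Finsupp.mapDomain_support ht)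
      exact ⟨Or.inr (hw ha), a.2⟩
    · rw [totD_embC, hwc, hcz]

end HellyBridge

/-- Topological Helly theorem for unions: for a simplicial complex embedded in `ℝ^d`
(formalized via Mathlib's geometric simplicial complexes) and a finite collection of
subcomplexes, vanishing of `H̃_{|Γ'|-2}(⋃Γ')` for all subcollections of size `≤ d+1`
forces a common face. -/
theorem topological_helly_unions (d : ℕ) [LinearOrder (EuclideanSpace ℝ (Fin d))]
    (F : Type*) [Field F] {ι : Type*} [Fintype ι]
    (X : Geometry.SimplicialComplex ℝ (EuclideanSpace ℝ (Fin d)))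
    (Γ : ι → Set (Finset (EuclideanSpace ℝ (Fin d))))
    (hΓ : ∀ i, IsComplex (Γ i) ∧ Γ i ⊆ X.faces)
    (h : ∀ Γ' : Finset ι, Γ'.Nonempty → Γ'.card ≤ d + 1 →
      RedHVanish F F (EuclideanSpace ℝ (Fin d)) (⋃ i ∈ Γ', Γ i) ((Γ'.card : ℤ) - 2)) :
    (⋂ i, Γ i).Nonempty := by
  classical
  rcases isEmpty_or_nonempty ι with hι | hι
  · exact ⟨∅, Set.mem_iInter.2 fun i => isEmptyElim i⟩
  letI : LinearOrder ι := LinearOrder.lift' (Fintype.equivFin ι) (Fintype.equivFin ι).injective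
  refine helly_alg (F := F) Γ (fun i => (hΓ i).1) fun σ hσ => ?_
  have hpos : 0 < σ.card := hσ.card_pos
  by_cases hσd : σ.card ≤ d + 1
  · refine ex_of_vanish F _ (fun s hs => ?_) _ ?_ ⟨fun s hs => ?_, fun s hs t hts ht => ?_⟩
    · simp only [Set.mem_iUnion] at hs
      obtain ⟨i, _, hsi⟩ := hs
      exact (hΓ i).1.1 s hsi
    · have := h σ hσ hσd
      rwa [Nat.sub_add_cancel hpos]
    · simp only [Set.mem_iUnion] at hs
      obtain ⟨i, _, hsi⟩ := hs
      exact (hΓ i).1.1 s hsi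
    · simp only [Set.mem_iUnion] at hs ⊢
      obtain ⟨i, hi, hsi⟩ := hs
      exact ⟨i, hi, (hΓ i).1.2 s hsi t hts ht⟩
  · refine ex_top F X _ (Set.iUnion₂_subset fun i _ => (hΓ i).2) _ ?_
    rw [finrank_euclideanSpace_fin]
    omega
end
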